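/- If a Hubbard tree (T,f) has an evil periodic orbit of branch points of exact period m, and its kneading sequence ν is not *-periodic of period less than m, then ν fails the admissibility condition for period m. -/

import Mathlib

/- Common definitions for formalizing "Admissibility of kneading sequences and
structure of Hubbard trees for quadratic polynomials" by Bruin–Schleicher. -/

namespace HubbardTrees

/-- The symbols `0`, `1`, `*` used for itineraries and kneading sequences. -/
inductive Sym : Type
  | zero : Sym
  | one : Sym
  | star : Sym
deriving DecidableEq

/-- `A` is an arc in `X` joining `x` and `y` (a point if `x = y`, otherwise a
homeomorphic image of `[0,1]` with endpoints `x` and `y`). -/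
def IsArcBetween {X : Type*} [TopologicalSpace X] (A : Set X) (x y : X) : Prop :=
  (x = y ∧ A = {x}) ∨
  (x ≠ y ∧ ∃ γ : Path x y, Topology.IsEmbedding ⇑γ ∧ Set.range ⇑γ = A)

/-- The global arms at `x`: the connected components of `X \ {x}`. -/
def arms {X : Type*} [TopologicalSpace X] (x : X) : Set (Set X) :=
  {C | ∃ y, y ≠ x ∧ C = connectedComponentIn {x}ᶜ y}

/-- The global arm at `x` containing `y` (for `y ≠ x`): the component of `X \ {x}`
containing `y`.  Local arms at `x` being germs of global arms, we represent the local
arm at `x` pointing towards `y` by this set. -/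
def armTo {X : Type*} [TopologicalSpace X] (x y : X) : Set X :=
  connectedComponentIn {x}ᶜ y

/-- `x` is an endpoint: it has exactly one arm. -/
def IsEndpoint {X : Type*} [TopologicalSpace X] (x : X) : Prop :=
  (arms x).ncard = 1

/-- `x` is a branch point: it has at least three arms. -/
def IsBranchPt {X : Type*} [TopologicalSpace X] (x : X) : Prop :=
  3 ≤ (arms x).ncard

/-- `f` maps the set `A` homeomorphically onto its image. -/
def MapsHomeoOn {X : Type*} [TopologicalSpace X] (f : X → X) (A : Set X) : Prop :=
  Topology.IsEmbedding (A.restrict f)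

/-- `f` is a local homeomorphism onto its image at `x`. -/
def IsLocalHomeoAt {X : Type*} [TopologicalSpace X] (f : X → X) (x : X) : Prop :=
  ∃ U : Set X, IsOpen U ∧ x ∈ U ∧ Topology.IsEmbedding (U.restrict f)

/-- `g` sends the local arm at `x` represented by the global arm `C` to the local
arm at `g x` represented by `C'` (germ condition: some initial piece of `C` at `x`
is mapped into `C'`). -/
def MapsLocalArm {X : Type*} [TopologicalSpace X] (g : X → X) (x : X) (C C' : Set X) : Prop :=
  C ∈ arms x ∧ C' ∈ arms (g x) ∧ ∃ U ∈ nhds x, g '' (C ∩ U) ⊆ C'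

/-- `z` is periodic under `f` with exact period `n`. -/
def ExactPeriod {Y : Type*} (f : Y → Y) (z : Y) (n : ℕ) : Prop :=
  1 ≤ n ∧ f^[n] z = z ∧ ∀ k, 1 ≤ k → k < n → f^[k] z ≠ z

/-- The first return map `f^[n]` of the fixed point `z` of `f^[n]` permutes all the
local arms at `z` transitively in a single cycle. -/
def ArmsTransitive {X : Type*} [TopologicalSpace X] (f : X → X) (n : ℕ) (z : X) : Prop :=
  ∀ C ∈ arms z, ∀ C' ∈ arms z, ∃ j : ℕ, MapsLocalArm (f^[n * j]) z C C'

/-- An (abstract) Hubbard tree: a finite topological tree `X` together with a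
continuous surjection `f` and a critical point `c0`, subject to the axioms of
Bruin–Schleicher. -/
structure HubbardTree (X : Type*) [TopologicalSpace X] : Type _ where
  /-- the dynamics -/
  f : X → X
  /-- the critical point -/
  c0 : X
  compact : CompactSpace X
  t2 : T2Space X
  conn : ConnectedSpace X
  /-- the unique arc `[x,y]` joining two points -/
  arc : X → X → Set X
  arc_isArc : ∀ x y : X, IsArcBetween (arc x y) x y
  arc_unique : ∀ (x y : X) (A : Set X), IsArcBetween A x y → A = arc x y
  -- finiteness of the tree
  arms_finite : ∀ x : X, (arms x).Finite
  branch_finite : Set.Finite {x : X | IsBranchPt x}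
  endpoint_finite : Set.Finite {x : X | IsEndpoint x}
  cont : Continuous f
  surj : Function.Surjective f
  /-- every point has at most two inverse images -/
  two_preimages : ∀ y : X, ∃ a b : X, f ⁻¹' {y} ⊆ {a, b}
  /-- local homeomorphism onto its image away from the critical point -/
  local_homeo : ∀ x : X, x ≠ c0 → IsLocalHomeoAt f x
  /-- all endpoints lie on the critical orbit -/
  endpoints_on_orbit : ∀ x : X, IsEndpoint x → ∃ k : ℕ, f^[k] c0 = x
  /-- the critical point is periodic or preperiodic -/
  crit_preperiodic : ∃ k n : ℕ, 1 ≤ n ∧ f^[k + n] c0 = f^[k] c0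
  /-- the critical point is not fixed -/
  crit_not_fixed : f c0 ≠ c0
  /-- expansivity -/
  expansive : ∀ x y : X, x ≠ y →
    (IsBranchPt x ∨ ∃ k : ℕ, f^[k] c0 = x) →
    (IsBranchPt y ∨ ∃ k : ℕ, f^[k] c0 = y) →
    ∃ n : ℕ, c0 ∈ f^[n] '' (arc x y)

namespace HubbardTree

variable {X : Type*} [TopologicalSpace X] (H : HubbardTree X)

/-- The critical value `c₁ = f(c₀)`. -/
def c1 : X := H.f H.c0

/-- The component `T₁` of `T \ {c₀}` containing the critical value. -/
def T1 : Set X := connectedComponentIn {H.c0}ᶜ H.c1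

open Classical in
/-- The symbol (`0`, `1` or `*`) attached to a point of the tree. -/
noncomputable def symOf (x : X) : Sym :=
  if x = H.c0 then Sym.star else if x ∈ H.T1 then Sym.one else Sym.zero

/-- The itinerary of `x`: a sequence of symbols, 1-indexed (the value at index `0`
is irrelevant); entry `k ≥ 1` is the symbol of `f^[k-1] x`. -/
noncomputable def itin (x : X) : ℕ → Sym :=
  fun k => H.symOf (H.f^[k - 1] x)

/-- The kneading sequence: the itinerary of the critical value (1-indexed). -/
noncomputable def kneading : ℕ → Sym := H.itin H.c1

/-- `z` is the characteristic point of its periodic orbit: `c₁` lies in one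
component of `X \ {z}` while `c₀` and all other points of the orbit lie in a
different component. -/
def IsCharacteristic (z : X) : Prop :=
  ∃ Cv Cz : Set X, Cv ∈ arms z ∧ Cz ∈ arms z ∧ Cv ≠ Cz ∧
    H.c1 ∈ Cv ∧ H.c0 ∈ Cz ∧ ∀ k : ℕ, H.f^[k] z ≠ z → H.f^[k] z ∈ Cz

/-- The first return map fixes the local arm at `z` pointing to the critical point
and permutes all other local arms transitively in a single cycle. -/
def OtherArmsTransitive (n : ℕ) (z : X) : Prop :=
  ∀ C ∈ arms z, C ≠ armTo z H.c0 → ∀ C' ∈ arms z, C' ≠ armTo z H.c0 →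
    ∃ j : ℕ, MapsLocalArm (H.f^[n * j]) z C C'

/-- `z` is the characteristic point of an evil periodic orbit of branch points of
exact period `n`. -/
def IsEvilOrbit (z : X) (n : ℕ) : Prop :=
  ExactPeriod H.f z n ∧ (∀ k : ℕ, IsBranchPt (H.f^[k] z)) ∧
    H.IsCharacteristic z ∧ ¬ ArmsTransitive H.f n z

/-- `x` is precritical with `Step(x) = k`: `k ≥ 1` is minimal with `f^[k] x = c₁`. -/
def Step (x : X) (k : ℕ) : Prop :=
  1 ≤ k ∧ H.f^[k] x = H.c1 ∧ ∀ j, 1 ≤ j → j < k → H.f^[j] x ≠ H.c1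

/-- `x` is the closest precritical point `ζ_k`. -/
def IsClosestPrecritical (x : X) (k : ℕ) : Prop :=
  H.Step x k ∧ ∀ j, 1 ≤ j → j < k → H.c1 ∉ H.f^[j] '' (H.arc H.c1 x)

/-- `x` is the earliest precritical point on the set `A`, with `Step(x) = k`:
it is a precritical point on `A` of minimal Step. -/
def IsEarliestPrecriticalOn (A : Set X) (x : X) (k : ℕ) : Prop :=
  x ∈ A ∧ H.Step x k ∧ ∀ y ∈ A, ∀ j : ℕ, H.Step y j → k ≤ j

/-- Marked points: branch points and points of the critical orbit. -/
def MarkedPt (x : X) : Prop :=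
  IsBranchPt x ∨ ∃ k : ℕ, H.f^[k] H.c0 = x

/-- Two marked points are joined by an edge if the arc between them contains no
further marked point. -/
def IsEdge (x y : X) : Prop :=
  H.MarkedPt x ∧ H.MarkedPt y ∧ x ≠ y ∧
    ∀ w ∈ H.arc x y, H.MarkedPt w → w = x ∨ w = y

/-- Equivalence of Hubbard trees: a bijection between the marked points which
conjugates the dynamics and preserves edges. -/
def Equivalent {Y : Type*} [TopologicalSpace Y] (H' : HubbardTree Y) : Prop :=
  ∃ φ : X → Y,
    (∀ x : X, H.MarkedPt x → H'.MarkedPt (φ x)) ∧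
    (∀ x x' : X, H.MarkedPt x → H.MarkedPt x' → φ x = φ x' → x = x') ∧
    (∀ y : Y, H'.MarkedPt y → ∃ x : X, H.MarkedPt x ∧ φ x = y) ∧
    φ H.c0 = H'.c0 ∧
    (∀ x : X, H.MarkedPt x → φ (H.f x) = H'.f (φ x)) ∧
    (∀ x x' : X, H.MarkedPt x → H.MarkedPt x' →
      (H.IsEdge x x' ↔ H'.IsEdge (φ x) (φ x')))

end HubbardTree

/-! ### Combinatorics of kneading sequences -/

/-- The function `ρ_ν(n) = inf { k > n : ν_k ≠ ν_{k-n} } ∈ ℕ ∪ {∞}` (sequences are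
1-indexed). -/
noncomputable def rho (ν : ℕ → Sym) (n : ℕ) : ℕ∞ :=
  sInf {e : ℕ∞ | ∃ j : ℕ, e = (j : ℕ∞) ∧ n < j ∧ ν j ≠ ν (j - n)}

/-- `RhoOrbit ν k m` means that `m` belongs to the `ρ`-orbit
`k → ρ(k) → ρ(ρ(k)) → ⋯` of `k` (stopped before reaching `∞`). -/
inductive RhoOrbit (ν : ℕ → Sym) : ℕ → ℕ → Prop
  | refl (k : ℕ) : RhoOrbit ν k k
  | step {k m j : ℕ} : RhoOrbit ν k m → rho ν m = (j : ℕ∞) → RhoOrbit ν k j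

/-- `m` occurs in the internal address `1 → ρ(1) → ρ(ρ(1)) → ⋯` of `ν`. -/
def InternalAddress (ν : ℕ → Sym) (m : ℕ) : Prop := RhoOrbit ν 1 m

/-- `ν` is a `*`-periodic kneading sequence of (exact) period `n`:
`ν = overline(1 ν₂ … ν_{n-1} *)`. -/
def StarPeriodic (ν : ℕ → Sym) (n : ℕ) : Prop :=
  2 ≤ n ∧ ν 1 = Sym.one ∧ ν n = Sym.star ∧
    (∀ k, 1 ≤ k → ν (k + n) = ν k) ∧
    (∀ k, 1 ≤ k → k < n → ν k ≠ Sym.star)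

/-- `ν` fails the admissibility condition for period `m`. -/
def FailsAdmissibility (ν : ℕ → Sym) (m : ℕ) : Prop :=
  1 ≤ m ∧
  ¬ InternalAddress ν m ∧
  (∀ k : ℕ, k ∣ m → 1 ≤ k → k < m → rho ν k ≤ (m : ℕ∞)) ∧
  ∃ R r : ℕ, rho ν m = (R : ℕ∞) ∧ 1 ≤ r ∧ r ≤ m ∧ r ≡ R [MOD m] ∧ RhoOrbit ν r m

open Classical in
/-- The number `q(m)` of arms predicted by the kneading sequence, where
`ρ(m) = R < ∞` and `r ∈ {1,…,m}` is congruent to `R` modulo `m`. -/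
noncomputable def qArms (ν : ℕ → Sym) (m R r : ℕ) : ℕ :=
  if RhoOrbit ν r m then (R - r) / m + 1 else (R - r) / m + 2


/-! ### Embeddings into the plane and cyclic order of arms -/

/-- Three points in the plane are in (strictly) counterclockwise position. -/
def Ccw (p q r : ℝ × ℝ) : Prop :=
  0 < (q.1 - p.1) * (r.2 - p.2) - (q.2 - p.2) * (r.1 - p.1)

namespace HubbardTree

variable {X : Type*} [TopologicalSpace X] (H : HubbardTree X)

/-- Under an embedding `φ` of the tree into the plane, `p` is a first exit point of
the arm `C` at `x` through the circle of radius `ε` around `φ x`: `p = φ y` for a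
point `y ∈ C` at distance exactly `ε`, such that the arc from `x` to `y` stays
within distance `< ε` before reaching `y`. -/
def ExitPt (φ : X → ℝ × ℝ) (x : X) (C : Set X) (ε : ℝ) (p : ℝ × ℝ) : Prop :=
  ∃ y ∈ C, φ y = p ∧ dist (φ x) p = ε ∧
    ∀ z ∈ H.arc x y, z ≠ y → dist (φ x) (φ z) < ε

/-- The local arms at `x` represented by the arms `C, C', C''` are in
counterclockwise cyclic order under the embedding `φ`. -/
def ArmsCcw (φ : X → ℝ × ℝ) (x : X) (C C' C'' : Set X) : Prop :=
  ∃ ε₀ : ℝ, 0 < ε₀ ∧ ∀ ε : ℝ, 0 < ε → ε < ε₀ →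
    ∀ p p' p'' : ℝ × ℝ, H.ExitPt φ x C ε p → H.ExitPt φ x C' ε p' →
      H.ExitPt φ x C'' ε p'' → Ccw p p' p''

/-- `f` respects the cyclic order (induced by the embedding `φ`) of the local arms
at all branch points. -/
def RespectsCyclicOrder (φ : X → ℝ × ℝ) : Prop :=
  ∀ x : X, IsBranchPt x →
    ∀ C C' C'' : Set X, C ∈ arms x → C' ∈ arms x → C'' ∈ arms x →
      C ≠ C' → C' ≠ C'' → C ≠ C'' → H.ArmsCcw φ x C C' C'' →
      ∀ D D' D'' : Set X, MapsLocalArm H.f x C D → MapsLocalArm H.f x C' D' →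
        MapsLocalArm H.f x C'' D'' → H.ArmsCcw φ (H.f x) D D' D''

/-- The Hubbard tree can be topologically embedded into the plane `ℝ²` so that `f`
respects the cyclic order of the local arms at all branch points. -/
def PlanarEmbeddable : Prop :=
  ∃ φ : X → ℝ × ℝ, Topology.IsEmbedding φ ∧ H.RespectsCyclicOrder φ

end HubbardTree


section Topo
variable {X : Type*} [TopologicalSpace X]

theorem notMem_armTo (x y : X) : x ∉ armTo x y := fun h =>
  connectedComponentIn_subset _ _ h rfl

theorem ne_of_mem_armTo {x y w : X} (h : w ∈ armTo x y) : w ≠ x := fun e =>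
  notMem_armTo x y (e ▸ h)

theorem mem_armTo_self {x y : X} (h : y ≠ x) : y ∈ armTo x y := mem_connectedComponentIn h

theorem armTo_eq_of_mem {x y w : X} (h : w ∈ armTo x y) : armTo x w = armTo x y :=
  (connectedComponentIn_eq h).symm

theorem mem_armTo_iff {x y w : X} (hw : w ≠ x) : w ∈ armTo x y ↔ armTo x w = armTo x y :=
  ⟨armTo_eq_of_mem, fun h => h ▸ mem_armTo_self hw⟩

theorem preconn_armTo (x y : X) : IsPreconnected (armTo x y) :=
  isPreconnected_connectedComponentIn

theorem subset_armTo {x y : X} {S : Set X} (hS : IsPreconnected S) (hx : x ∉ S) (hy : y ∈ S) :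
    S ⊆ armTo x y :=
  hS.subset_connectedComponentIn hy (Set.subset_compl_singleton_iff.2 hx)

theorem armTo_eq_of_preconn {x y w : X} {S : Set X} (hS : IsPreconnected S) (hx : x ∉ S)
    (hy : y ∈ S) (hw : w ∈ S) : armTo x y = armTo x w :=
  (armTo_eq_of_mem (subset_armTo hS hx hy hw)).symm

theorem armTo_mem_arms {x y : X} (h : y ≠ x) : armTo x y ∈ arms x := ⟨y, h, rfl⟩

theorem armTo_self (x : X) : armTo x x = ∅ := connectedComponentIn_eq_empty (by simp)

theorem arm_eq_armTo {x a : X} {C : Set X} (hC : C ∈ arms x) (ha : a ∈ C) : C = armTo x a := by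
  obtain ⟨y, hy, rfl⟩ := hC
  exact (armTo_eq_of_mem ha).symm

theorem arm_nonempty {x : X} {C : Set X} (hC : C ∈ arms x) : ∃ a, a ≠ x ∧ C = armTo x a := hC

theorem closure_armTo {x y w : X} (h : w ∈ closure (armTo x y)) (hw : w ≠ x) (hy : y ≠ x) :
    w ∈ armTo x y := by
  have h1 : IsPreconnected (closure (armTo x y) ∩ {x}ᶜ) :=
    (preconn_armTo x y).subset_closure
      (fun a ha => ⟨subset_closure ha, ne_of_mem_armTo ha⟩) Set.inter_subset_left
  exact subset_armTo h1 (by simp) ⟨subset_closure (mem_armTo_self hy), hy⟩ ⟨h, hw⟩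

theorem isOpen_armTo [T2Space X] {x : X} (hfin : (arms x).Finite) (y : X) :
    IsOpen (armTo x y) := by
  by_cases hy : y = x
  · subst hy; rw [armTo_self]; exact isOpen_empty
  have hcl : IsClosed (⋃ C ∈ arms x \ {armTo x y}, closure C) :=
    (hfin.sdiff).isClosed_biUnion (fun C _ => isClosed_closure)
  have : armTo x y = {x}ᶜ ∩ (⋃ C ∈ arms x \ {armTo x y}, closure C)ᶜ := by
    ext w
    constructor
    · intro hw
      refine ⟨ne_of_mem_armTo hw, ?_⟩
      simp only [Set.mem_compl_iff, Set.mem_iUnion, not_exists]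
      rintro C ⟨⟨a, ha, rfl⟩, hne⟩ hwc
      have := closure_armTo hwc (ne_of_mem_armTo hw) ha
      exact hne ((armTo_eq_of_mem this).symm.trans (armTo_eq_of_mem hw))
    · rintro ⟨hw, h2⟩
      simp only [Set.mem_compl_iff, Set.mem_iUnion, not_exists] at h2
      by_contra h3
      refine h2 (armTo x w) ⟨armTo_mem_arms hw, fun h4 => h3 ?_⟩
        (subset_closure (mem_armTo_self hw))
      exact (mem_armTo_iff hw).2 h4
  rw [this]
  exact isOpen_compl_singleton.inter hcl.isOpen_compl

theorem base_mem_closure [T2Space X] [ConnectedSpace X] {x y : X} (hfin : (arms x).Finite)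
    (hy : y ≠ x) : x ∈ closure (armTo x y) := by
  by_contra h
  have hc : IsClosed (armTo x y) := by
    refine isClosed_of_closure_subset fun w hw => closure_armTo hw ?_ hy
    rintro rfl; exact h hw
  have := IsClopen.eq_univ ⟨hc, isOpen_armTo hfin y⟩ ⟨y, mem_armTo_self hy⟩
  exact notMem_armTo x y (this ▸ Set.mem_univ x)

theorem preconn_insert_armTo [T2Space X] [ConnectedSpace X] {x y : X} (hfin : (arms x).Finite)
    (hy : y ≠ x) : IsPreconnected (insert x (armTo x y)) :=
  (preconn_armTo x y).subset_closure (Set.subset_insert _ _)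
    (Set.insert_subset (base_mem_closure hfin hy) subset_closure)

theorem insert_armTo_subset [T2Space X] [ConnectedSpace X] {p q a : X} (hfin : (arms q).Finite)
    (ha : a ≠ q) (hp : p ∉ armTo q a) (hpq : p ≠ q) :
    insert q (armTo q a) ⊆ armTo p q :=
  subset_armTo (preconn_insert_armTo hfin ha) (by simp [hp, hpq]) (Set.mem_insert _ _)

/-- maximal elements in compact sets -/
theorem exists_far [CompactSpace X] [T2Space X] [ConnectedSpace X]
    (hfin : ∀ x : X, (arms x).Finite) {K : Set X} (hK : IsCompact K) {p q₀ : X}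
    (hq₀ : q₀ ∈ K) (hne : q₀ ≠ p) :
    ∃ q ∈ K, q ≠ p ∧ q ∉ armTo q₀ p ∧ ∀ q' ∈ K, q' ≠ q → q' ∈ armTo q p := by
  have key : ∀ q q' : X, q ≠ p → q' ≠ q → q' ∉ armTo q p → insert q (armTo q p) ⊆ armTo q' p := by
    intro q q' h1 h2 h3
    have := insert_armTo_subset (hfin q) h1.symm h3 h2
    have hp : p ∈ armTo q' q := this (Set.mem_insert_of_mem _ (mem_armTo_self h1.symm))
    rwa [armTo_eq_of_mem hp]
  let F : Set (Set X) := {S | ∃ q ∈ K, q ∉ armTo q₀ p ∧ S = K ∩ (armTo q p)ᶜ}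
  have hp0 : ∀ q, q ∉ armTo q₀ p → q ≠ p := by
    rintro q h rfl; exact h (mem_armTo_self hne.symm)
  have hz : ∃ M, Minimal (· ∈ F) M := by
    refine zorn_superset F fun c hcF hc => ?_
    rcases c.eq_empty_or_nonempty with rfl | hcn
    · exact ⟨K ∩ (armTo q₀ p)ᶜ, ⟨q₀, hq₀, notMem_armTo _ _, rfl⟩, by simp⟩
    have : Nonempty c := hcn.to_subtype
    have hne : (⋂₀ c).Nonempty := by
      rw [Set.sInter_eq_iInter]
      refine IsCompact.nonempty_iInter_of_directed_nonempty_isCompact_isClosed _ ?_ ?_ ?_ ?_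
      · intro a b
        rcases hc.total a.2 b.2 with h | h
        · exact ⟨a, subset_rfl, h⟩
        · exact ⟨b, h, subset_rfl⟩
      · rintro ⟨S, hS⟩
        obtain ⟨q, hq, h1, rfl⟩ := hcF hS
        exact ⟨q, hq, notMem_armTo _ _⟩
      · rintro ⟨S, hS⟩
        obtain ⟨q, hq, h1, rfl⟩ := hcF hS
        exact hK.inter_right (isOpen_armTo (hfin q) p).isClosed_compl
      · rintro ⟨S, hS⟩
        obtain ⟨q, hq, h1, rfl⟩ := hcF hS
        exact (hK.inter_right (isOpen_armTo (hfin q) p).isClosed_compl).isClosed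
    obtain ⟨t, ht⟩ := hne
    obtain ⟨S, hS⟩ := hcn
    have hS2 := hcF hS
    obtain ⟨q, hq, h1, rfl⟩ := hS2
    have htS := ht _ hS
    refine ⟨K ∩ (armTo t p)ᶜ, ⟨t, htS.1, ?_, rfl⟩, ?_⟩
    · intro h2
      by_cases hqq : q = q₀
      · subst hqq; exact htS.2 h2
      · exact htS.2 (key q₀ q hne hqq h1 (Set.mem_insert_of_mem _ h2))
    · intro S hS w hw
      obtain ⟨q, hq, h1, rfl⟩ := hcF hS
      have htS := ht _ hS
      refine ⟨hw.1, fun h3 => hw.2 ?_⟩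
      by_cases htq : t = q
      · subst htq; exact h3
      · exact key q t (hp0 q h1) htq htS.2 (Set.mem_insert_of_mem _ h3)
  obtain ⟨M, ⟨q, hq, h1, rfl⟩, hmin⟩ := hz
  refine ⟨q, hq, hp0 q h1, h1, fun q' hq' hne' => ?_⟩
  by_contra h4
  have h5 := key q q' (hp0 q h1) hne' h4
  have h6 : K ∩ (armTo q' p)ᶜ ∈ F := by
    refine ⟨q', hq', fun h7 => ?_, rfl⟩
    by_cases hqq : q = q₀
    · subst hqq; exact h4 h7
    · exact h4 (key q₀ q hne hqq h1 (Set.mem_insert_of_mem _ h7))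
  have h8 : K ∩ (armTo q' p)ᶜ ≤ K ∩ (armTo q p)ᶜ := fun w hw =>
    ⟨hw.1, fun h => hw.2 (h5 (Set.mem_insert_of_mem _ h))⟩
  exact (hmin h6 h8 ⟨hq, notMem_armTo _ _⟩).2 (h5 (Set.mem_insert _ _))

theorem isEndpoint_of {q p : X} (hqp : q ≠ p) (h : ∀ q', q' ≠ q → q' ∈ armTo q p) :
    IsEndpoint q := by
  have : arms q = {armTo q p} := by
    ext C
    constructor
    · rintro ⟨y, hy, rfl⟩
      exact armTo_eq_of_mem (h y hy)
    · rintro rfl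
      exact armTo_mem_arms hqp.symm
  rw [IsEndpoint, this, Set.ncard_singleton]

theorem armTo_eq_of_isEndpoint {q a b : X} (hq : IsEndpoint q) (ha : a ≠ q) (hb : b ≠ q) :
    armTo q a = armTo q b := by
  obtain ⟨C, hC⟩ := Set.ncard_eq_one.1 hq
  have h1 : armTo q a ∈ arms q := armTo_mem_arms ha
  have h2 : armTo q b ∈ arms q := armTo_mem_arms hb
  rw [hC] at h1 h2
  exact h1.trans h2.symm

theorem exists_endpoint_arm [CompactSpace X] [T2Space X] [ConnectedSpace X]
    (hfin : ∀ x : X, (arms x).Finite) {s u : X} (hu : u ≠ s) :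
    ∃ e ∈ armTo s u, IsEndpoint e := by
  obtain ⟨q, -, h1, h2, h3⟩ := exists_far hfin isCompact_univ (Set.mem_univ u) hu
  refine ⟨q, ?_, isEndpoint_of h1 fun q' h => h3 q' (Set.mem_univ _) h⟩
  by_cases hq : q = u
  · subst hq; exact mem_armTo_self hu
  have : s ∉ armTo u q := fun h => h2 ((mem_armTo_iff hq).2 (armTo_eq_of_mem h).symm)
  exact insert_armTo_subset (hfin u) hq this hu.symm (Set.mem_insert_of_mem _ (mem_armTo_self hq))

end Topo

namespace HubbardTree
open Set
variable {X : Type*} [TopologicalSpace X] (H : HubbardTree X)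

theorem exists_param {x y : X} (h : x ≠ y) : ∃ γ : ℝ → X, Continuous γ ∧
    InjOn γ (Icc 0 1) ∧ γ 0 = x ∧ γ 1 = y ∧ H.arc x y = γ '' Icc 0 1 := by
  rcases H.arc_isArc x y with ⟨h', _⟩ | ⟨_, γ, hγ, hr⟩
  · exact absurd h' h
  refine ⟨γ.extend, γ.continuous_extend, ?_, γ.extend_zero, γ.extend_one, ?_⟩
  · intro a ha b hb hab
    rw [Path.extend_apply _ ha, Path.extend_apply _ hb] at hab
    exact congrArg Subtype.val (hγ.injective hab)
  · rw [← hr]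
    ext w
    constructor
    · rintro ⟨t, rfl⟩
      exact ⟨t, t.2, Path.extend_apply _ t.2⟩
    · rintro ⟨t, ht, rfl⟩
      exact ⟨⟨t, ht⟩, (Path.extend_apply _ ht).symm⟩

theorem arc_self (x : X) : H.arc x x = {x} :=
  (H.arc_unique x x {x} (Or.inl ⟨rfl, rfl⟩)).symm

theorem arc_of_injOn {γ : ℝ → X} {a b : ℝ} (hab : a ≤ b) (hc : ContinuousOn γ (Icc a b))
    (hi : InjOn γ (Icc a b)) : γ '' Icc a b = H.arc (γ a) (γ b) := by
  have := H.t2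
  rcases hab.eq_or_lt with rfl | hlt
  · simp [arc_self]
  refine H.arc_unique _ _ _ (Or.inr ⟨?_, ?_⟩)
  · intro h
    exact hlt.ne (hi ⟨le_rfl, hab⟩ ⟨hab, le_rfl⟩ h)
  have hmem : ∀ s : unitInterval, a + (b - a) * (s : ℝ) ∈ Icc a b := by
    intro s
    have h0 := s.2.1
    have h1 := s.2.2
    constructor <;> nlinarith
  have hcont : Continuous fun s : unitInterval => γ (a + (b - a) * (s : ℝ)) :=
    hc.comp_continuous (by fun_prop) hmem
  let P : Path (γ a) (γ b) :=
    { toFun := fun s => γ (a + (b - a) * (s : ℝ))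
      continuous_toFun := hcont
      source' := by simp
      target' := by simp }
  refine ⟨P, ?_, ?_⟩
  · refine (Continuous.isClosedEmbedding P.continuous ?_).isEmbedding
    intro s t hst
    have := hi (hmem s) (hmem t) hst
    have h2 : (b - a) * ((s : ℝ) - t) = 0 := by linarith
    rcases mul_eq_zero.1 h2 with h3 | h3
    · linarith
    · exact Subtype.ext (by linarith)
  · ext w
    constructor
    · rintro ⟨s, rfl⟩
      exact ⟨_, hmem s, rfl⟩
    · rintro ⟨t, ht, rfl⟩
      have hba : 0 < b - a := by linarith
      refine ⟨⟨(t - a) / (b - a), div_nonneg (by linarith [ht.1]) hba.le,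
        (div_le_one hba).2 (by linarith [ht.2])⟩, ?_⟩
      change γ (a + (b - a) * ((t - a) / (b - a))) = γ t
      congr 1
      field_simp
      ring

theorem armTo_param {γ : ℝ → X} (hγ : Continuous γ) (hi : InjOn γ (Icc 0 1)) {s a b : ℝ}
    (ha : 0 ≤ a) (hab : a ≤ b) (hb : b ≤ 1) (hs0 : 0 ≤ s) (hs1 : s ≤ 1) (h : s < a ∨ b < s) :
    armTo (γ s) (γ a) = armTo (γ s) (γ b) := by
  refine armTo_eq_of_preconn (S := γ '' Icc a b) ((isPreconnected_Icc).image _ hγ.continuousOn)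
    ?_ ⟨a, ⟨le_rfl, hab⟩, rfl⟩ ⟨b, ⟨hab, le_rfl⟩, rfl⟩
  rintro ⟨t, ht, h2⟩
  have := hi ⟨by linarith [ht.1], by linarith [ht.2]⟩ ⟨hs0, hs1⟩ h2
  rcases h with h | h <;> linarith [ht.1, ht.2]

theorem finite_bad (H : HubbardTree X) {γ : ℝ → X} (hγ : Continuous γ) (hi : InjOn γ (Icc 0 1)) :
    {s : ℝ | s ∈ Ioo 0 1 ∧ armTo (γ s) (γ 0) = armTo (γ s) (γ 1)}.Finite := by
  have := H.t2
  have := H.compact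
  have := H.conn
  by_contra hinf
  set B := {s : ℝ | s ∈ Ioo 0 1 ∧ armTo (γ s) (γ 0) = armTo (γ s) (γ 1)} with hB
  have hBI : B ⊆ Icc 0 1 := fun s hs => ⟨hs.1.1.le, hs.1.2.le⟩
  have hin : ∀ s ∈ B, ∀ t ∈ Icc (0 : ℝ) 1, t ≠ s → armTo (γ s) (γ t) = armTo (γ s) (γ 0) := by
    intro s hs t ht hne
    rcases lt_or_gt_of_ne hne with h | h
    · exact (armTo_param hγ hi le_rfl ht.1 ht.2 (hBI hs).1 (hBI hs).2 (Or.inr h)).symm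
    · rw [hs.2]
      exact armTo_param hγ hi ht.1 ht.2 le_rfl (hBI hs).1 (hBI hs).2 (Or.inl h)
  let B' := B \ (γ ⁻¹' {x | IsEndpoint x})
  have hB' : B'.Infinite := by
    have hf : (B ∩ γ ⁻¹' {x | IsEndpoint x}).Finite := by
      refine Set.Finite.of_finite_image (f := γ) (H.endpoint_finite.subset ?_)
        ((hi.mono hBI).mono inter_subset_left)
      rintro _ ⟨s, hs, rfl⟩
      exact hs.2
    intro hfin
    apply hinf
    refine (hfin.union hf).subset fun s hs => ?_
    by_cases h : s ∈ γ ⁻¹' {x | IsEndpoint x}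
    · exact Or.inr ⟨hs, h⟩
    · exact Or.inl ⟨hs, h⟩
  have hex : ∀ s ∈ B', ∃ e u, u ≠ γ s ∧ IsEndpoint e ∧ e ∈ armTo (γ s) u ∧
      armTo (γ s) u ≠ armTo (γ s) (γ 0) := by
    intro s hs
    have hne : γ s ≠ γ 0 := fun h =>
      hs.1.1.1.ne' (hi (hBI hs.1) ⟨le_rfl, zero_le_one⟩ h)
    have : ∃ u, u ≠ γ s ∧ u ∉ armTo (γ s) (γ 0) := by
      by_contra hcon
      push Not at hcon
      exact hs.2 (isEndpoint_of hne hcon)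
    obtain ⟨u, hu, hu2⟩ := this
    obtain ⟨e, he, he2⟩ := exists_endpoint_arm H.arms_finite hu
    exact ⟨e, u, hu, he2, he, fun h => hu2 ((mem_armTo_iff hu).2 h)⟩
  choose! e u hu he1 he2 he3 using hex
  refine Set.infinite_of_injOn_mapsTo (f := e) (t := {x | IsEndpoint x}) ?_ ?_ hB' H.endpoint_finite
  · intro s hs t ht hst
    by_contra hne
    have h1 : γ t ∉ armTo (γ s) (u s) := by
      intro h
      exact he3 s hs ((armTo_eq_of_mem h).symm.trans (hin s hs.1 t (hBI ht.1) (Ne.symm hne)))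
    have hγne : γ t ≠ γ s := fun h => hne (hi (hBI ht.1) (hBI hs.1) h).symm
    have h2 := insert_armTo_subset (H.arms_finite _) (hu s hs) h1 hγne
      (mem_insert_of_mem _ (he2 s hs))
    rw [hin t ht.1 s (hBI hs.1) hne, hst] at h2
    exact he3 t ht ((armTo_eq_of_mem (he2 t ht)).symm.trans (armTo_eq_of_mem h2))
  · exact he1

theorem exists_good (H : HubbardTree X) {γ : ℝ → X} (hγ : Continuous γ) (hi : InjOn γ (Icc 0 1)) {a b : ℝ}
    (h0 : 0 ≤ a) (hab : a < b) (h1 : b ≤ 1) :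
    ∃ s ∈ Ioo a b, armTo (γ s) (γ 0) ≠ armTo (γ s) (γ 1) := by
  obtain ⟨s, hs, hs2⟩ := ((Ioo_infinite hab).sdiff (H.finite_bad hγ hi)).nonempty
  exact ⟨s, hs, fun h => hs2 ⟨⟨h0.trans_lt hs.1, hs.2.trans_le h1⟩, h⟩⟩

theorem arc_sep {x y p : X} (hp : p ∈ H.arc x y) (hpx : p ≠ x) (hpy : p ≠ y) :
    armTo p x ≠ armTo p y := by
  have := H.t2
  have := H.compact
  have := H.conn
  have hxy : x ≠ y := by
    rintro rfl
    rw [arc_self] at hp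
    exact hpx hp
  obtain ⟨γ, hγ, hi, hg0, hg1, harc⟩ := H.exists_param hxy
  rw [harc] at hp
  obtain ⟨π, hπ, rfl⟩ := hp
  have hπ0 : 0 < π := lt_of_le_of_ne hπ.1 (by rintro rfl; exact hpx hg0)
  have hπ1 : π < 1 := lt_of_le_of_ne hπ.2 (by rintro rfl; exact hpy hg1)
  subst hg0 hg1
  set G := {s : ℝ | s ∈ Ioo 0 π ∧ armTo (γ s) (γ 0) ≠ armTo (γ s) (γ 1)} with hG
  let Y : Set X := ⋃ s ∈ G, armTo (γ s) (γ 0)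
  have hGI : ∀ s ∈ G, 0 ≤ s ∧ s ≤ 1 := fun s hs => ⟨hs.1.1.le, hs.1.2.le.trans hπ1.le⟩
  have hGp : ∀ s ∈ G, armTo (γ s) (γ π) = armTo (γ s) (γ 1) := fun s hs =>
    armTo_param hγ hi hπ.1 hπ1.le le_rfl (hGI s hs).1 (hGI s hs).2 (Or.inl hs.1.2)
  have hYo : IsOpen Y := isOpen_biUnion fun s _ => isOpen_armTo (H.arms_finite _) _
  have hγY : ∀ t, 0 ≤ t → t < π → γ t ∈ Y := by
    intro t h0 h1
    obtain ⟨s, hs, hs2⟩ := H.exists_good hγ hi h0 h1 hπ1.le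
    have hsG : s ∈ G := ⟨⟨h0.trans_lt hs.1, hs.2⟩, hs2⟩
    refine mem_biUnion hsG ?_
    refine (mem_armTo_iff ?_).2 ?_
    · intro h
      exact hs.1.ne (hi ⟨h0, h1.le.trans hπ1.le⟩ (hGI s hsG) h)
    · exact (armTo_param hγ hi le_rfl h0 (h1.le.trans hπ1.le) (hGI s hsG).1 (hGI s hsG).2
        (Or.inr hs.1)).symm
  have hYc : IsPreconnected Y := by
    refine isPreconnected_of_forall (γ 0) ?_
    rintro w hw
    obtain ⟨s, hs, hw⟩ := mem_iUnion₂.1 hw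
    refine ⟨armTo (γ s) (γ 0), subset_biUnion_of_mem (u := fun s => armTo (γ s) (γ 0)) hs,
      mem_armTo_self ?_, hw, preconn_armTo _ _⟩
    intro h
    exact hs.1.1.ne (hi ⟨le_rfl, zero_le_one⟩ (hGI s hs) h)
  have hpcl : γ π ∈ closure Y := by
    have h1 : π ∈ closure (Ico 0 π) := by
      rw [closure_Ico hπ0.ne]; exact ⟨hπ.1, le_rfl⟩
    have h2 := image_closure_subset_closure_image hγ (mem_image_of_mem γ h1)
    refine closure_mono ?_ h2
    rintro _ ⟨t, ht, rfl⟩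
    exact hγY t ht.1 ht.2
  have hpY : γ π ∉ Y := by
    intro h
    obtain ⟨s, hs, hw⟩ := mem_iUnion₂.1 h
    exact hs.2 ((armTo_eq_of_mem hw).symm.trans (hGp s hs))
  have hyY : γ 1 ∉ Y := by
    intro h
    obtain ⟨s, hs, hw⟩ := mem_iUnion₂.1 h
    exact hs.2 (armTo_eq_of_mem hw).symm
  have hYpc : IsPreconnected (insert (γ π) Y) :=
    hYc.subset_closure (subset_insert _ _) (insert_subset hpcl subset_closure)
  have hZo : IsOpen (insert (γ π) Y)ᶜ := by
    rw [isOpen_iff_forall_mem_open]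
    intro t ht
    rw [mem_compl_iff, mem_insert_iff, not_or] at ht
    obtain ⟨htp, htY⟩ := ht
    obtain ⟨δ, hδ, hδi, hδ0, hδ1, -⟩ := H.exists_param (Ne.symm htp)
    obtain ⟨σ, hσ, hσ2⟩ := H.exists_good hδ hδi le_rfl one_pos le_rfl
    have hσI : σ ∈ Icc (0 : ℝ) 1 := ⟨hσ.1.le, hσ.2.le⟩
    have h0I : (0 : ℝ) ∈ Icc (0 : ℝ) 1 := ⟨le_rfl, zero_le_one⟩
    have h1I : (1 : ℝ) ∈ Icc (0 : ℝ) 1 := ⟨zero_le_one, le_rfl⟩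
    have hsp : δ σ ≠ γ π := by
      rw [← hδ0]; intro h; exact hσ.1.ne' (hδi hσI h0I h)
    have hst : δ σ ≠ t := by
      rw [← hδ1]; intro h; exact hσ.2.ne (hδi hσI h1I h)
    have hsY : δ σ ∉ Y := by
      intro h
      obtain ⟨s, hs, hw⟩ := mem_iUnion₂.1 h
      have hqp : γ s ∈ δ '' Icc 0 σ := by
        by_contra hq
        have := armTo_eq_of_preconn (isPreconnected_Icc.image _ hδ.continuousOn) hq
          ⟨0, ⟨le_rfl, hσ.1.le⟩, rfl⟩ ⟨σ, ⟨hσ.1.le, le_rfl⟩, rfl⟩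
        rw [hδ0, hGp s hs, armTo_eq_of_mem hw] at this
        exact hs.2 this.symm
      have hqt : γ s ∈ δ '' Icc σ 1 := by
        by_contra hq
        have := armTo_eq_of_preconn (isPreconnected_Icc.image _ hδ.continuousOn) hq
          ⟨1, ⟨hσ.2.le, le_rfl⟩, rfl⟩ ⟨σ, ⟨le_rfl, hσ.2.le⟩, rfl⟩
        rw [hδ1, armTo_eq_of_mem hw] at this
        refine htY (mem_biUnion hs ((mem_armTo_iff ?_).2 this))
        intro hts
        exact hq ⟨1, ⟨hσ.2.le, le_rfl⟩, hδ1.trans hts⟩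
      obtain ⟨α, hα, hα2⟩ := hqp
      obtain ⟨β, hβ, hβ2⟩ := hqt
      have hab : α = β := hδi ⟨hα.1, hα.2.trans hσ.2.le⟩ ⟨hσ.1.le.trans hβ.1, hβ.2⟩
        (hα2.trans hβ2.symm)
      have : α = σ := le_antisymm hα.2 (hab ▸ hβ.1)
      exact ne_of_mem_armTo hw (by rw [← this, hα2])
    refine ⟨armTo (δ σ) t, ?_, isOpen_armTo (H.arms_finite _) _, mem_armTo_self hst.symm⟩
    intro w hw hwY
    have h3 : armTo (δ σ) (γ π) = armTo (δ σ) w :=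
      armTo_eq_of_preconn hYpc (by simp [hsp, hsY]) (mem_insert _ _) hwY
    rw [armTo_eq_of_mem hw, ← hδ0, ← hδ1] at h3
    exact hσ2 h3
  intro heq
  have hx : γ 0 ∈ armTo (γ π) (γ 0) := mem_armTo_self hpx.symm
  have hy : γ 1 ∈ armTo (γ π) (γ 0) := heq ▸ mem_armTo_self hpy.symm
  obtain ⟨w, -, hw1, hw2⟩ := preconn_armTo (γ π) (γ 0) Y _ hYo hZo
    (fun w hw => by
      by_cases hwY : w ∈ Y
      · exact Or.inl hwY
      · exact Or.inr (by simp [hwY, ne_of_mem_armTo hw]))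
    ⟨_, hx, hγY 0 le_rfl hπ0⟩ ⟨_, hy, by simp [hyY, hpy.symm]⟩
  exact hw2 (mem_insert_of_mem _ hw1)

theorem preconn_arc (x y : X) : IsPreconnected (H.arc x y) := by
  by_cases h : x = y
  · subst h; rw [arc_self]; exact isPreconnected_singleton
  obtain ⟨γ, hγ, hi, hg0, hg1, harc⟩ := H.exists_param h
  rw [harc]
  exact isPreconnected_Icc.image _ hγ.continuousOn

theorem isCompact_arc (x y : X) : IsCompact (H.arc x y) := by
  by_cases h : x = y
  · subst h; rw [arc_self]; exact isCompact_singleton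
  obtain ⟨γ, hγ, hi, hg0, hg1, harc⟩ := H.exists_param h
  rw [harc]
  exact isCompact_Icc.image hγ

theorem left_mem_arc (x y : X) : x ∈ H.arc x y := by
  by_cases h : x = y
  · subst h; rw [arc_self]; rfl
  obtain ⟨γ, hγ, hi, hg0, hg1, harc⟩ := H.exists_param h
  rw [harc]
  exact ⟨0, by simp, hg0⟩

theorem right_mem_arc (x y : X) : y ∈ H.arc x y := by
  by_cases h : x = y
  · subst h; rw [arc_self]; rfl
  obtain ⟨γ, hγ, hi, hg0, hg1, harc⟩ := H.exists_param h
  rw [harc]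
  exact ⟨1, by simp, hg1⟩

theorem mem_arc_iff {p x y : X} : p ∈ H.arc x y ↔ p = x ∨ p = y ∨ armTo p x ≠ armTo p y := by
  constructor
  · intro h
    by_cases h1 : p = x
    · exact Or.inl h1
    by_cases h2 : p = y
    · exact Or.inr (Or.inl h2)
    exact Or.inr (Or.inr (H.arc_sep h h1 h2))
  · rintro (rfl | rfl | h)
    · exact H.left_mem_arc _ _
    · exact H.right_mem_arc _ _
    · by_contra hp
      exact h (armTo_eq_of_preconn (H.preconn_arc x y) hp (H.left_mem_arc _ _)
        (H.right_mem_arc _ _))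

theorem armTo_eq_of_notMem {p x y : X} (h : p ∉ H.arc x y) : armTo p x = armTo p y := by
  by_contra hc
  exact h (H.mem_arc_iff.2 (Or.inr (Or.inr hc)))

theorem arc_comm (x y : X) : H.arc x y = H.arc y x := by
  ext p; rw [mem_arc_iff, mem_arc_iff]; tauto

theorem arc_subset_union (x z y : X) : H.arc x y ⊆ H.arc x z ∪ H.arc z y := by
  intro p hp
  by_contra h
  rw [mem_union, not_or] at h
  rcases H.mem_arc_iff.1 hp with rfl | rfl | h3
  · exact h.1 (H.left_mem_arc _ _)
  · exact h.2 (H.right_mem_arc _ _)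
  · exact h3 ((H.armTo_eq_of_notMem h.1).trans (H.armTo_eq_of_notMem h.2))

/-- a point of `[x,p]` other than `p`, for `p ∈ [x,y]`, lies on the `x`-side of `p` -/
theorem arc_antisymm {p q x : X} (h1 : p ∈ H.arc x q) (h2 : q ∈ H.arc x p) : p = q := by
  have := H.t2
  have := H.conn
  by_contra hne
  by_cases hpx : p = x
  · subst hpx; rw [arc_self] at h2; exact hne h2.symm
  by_cases hqx : q = x
  · subst hqx; rw [arc_self] at h1; exact hne h1
  have h3 := H.arc_sep h1 hpx hne
  have h4 := H.arc_sep h2 hqx (Ne.symm hne)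
  have h5 : q ∉ armTo p x := fun h => h3 (armTo_eq_of_mem h).symm
  have h6 := insert_armTo_subset (H.arms_finite p) (Ne.symm hpx) h5 (Ne.symm hne)
    (mem_insert_of_mem _ (mem_armTo_self (Ne.symm hpx)))
  exact h4 (armTo_eq_of_mem h6)

theorem arc_subset_left {p x y : X} (h : p ∈ H.arc x y) : H.arc x p ⊆ H.arc x y := by
  intro q hq
  by_contra hn
  have h1 := H.armTo_eq_of_notMem hn
  rcases H.mem_arc_iff.1 hq with rfl | rfl | h2
  · exact hn (H.left_mem_arc _ _)
  · exact hn h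
  · rw [h1] at h2
    have h3 : q ∈ H.arc y p := H.mem_arc_iff.2 (Or.inr (Or.inr h2))
    -- p ∈ [x,y], so p ∈ [x,q] or p ∈ [q,y]
    rcases H.arc_subset_union x q y h with h4 | h4
    · have := H.arc_antisymm h4 hq
      subst this; exact hn h
    · rw [H.arc_comm] at h4
      have := H.arc_antisymm h4 h3
      subst this; exact hn h

/-- medians -/
theorem exists_median {x u w : X} (h : x ∉ H.arc u w) :
    ∃ v, v ≠ x ∧ v ∈ H.arc x u ∧ v ∈ H.arc x w := by
  have := H.t2
  have h1 := (isPreconnected_closed_iff.1 (H.preconn_arc u w)) (H.arc x u) (H.arc x w)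
    (H.isCompact_arc _ _).isClosed (H.isCompact_arc _ _).isClosed
    (by
      have := H.arc_subset_union u x w
      rwa [H.arc_comm u x] at this)
    ⟨u, H.left_mem_arc _ _, H.right_mem_arc _ _⟩ ⟨w, H.right_mem_arc _ _, H.right_mem_arc _ _⟩
  obtain ⟨v, hv, hv1, hv2⟩ := h1
  exact ⟨v, fun e => h (e ▸ hv), hv1, hv2⟩

/-- `f` is injective on arcs whose interior does not contain the critical point -/
theorem injOn_arc {x y : X} (hc : ∀ p ∈ H.arc x y, p = H.c0 → p = x ∨ p = y) :
    InjOn H.f (H.arc x y) ∧ H.f '' H.arc x y = H.arc (H.f x) (H.f y) := by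
  have := H.t2
  have := H.compact
  have := H.conn
  by_cases hxy : x = y
  · subst hxy; simp [arc_self]
  obtain ⟨γ, hγ, hi, hg0, hg1, harc⟩ := H.exists_param hxy
  subst hg0 hg1
  set σ : ℝ → X := fun t => H.f (γ t) with hσ
  have hσc : Continuous σ := H.cont.comp hγ
  have hloc : ∀ t ∈ Ioo (0 : ℝ) 1, ∃ ε > 0, Icc (t - ε) (t + ε) ⊆ Ioo 0 1 ∧
      InjOn σ (Icc (t - ε) (t + ε)) := by
    intro t ht
    have htI : t ∈ Icc (0 : ℝ) 1 := ⟨ht.1.le, ht.2.le⟩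
    have hne : γ t ≠ H.c0 := by
      intro h
      rcases hc (γ t) (harc ▸ ⟨t, htI, rfl⟩) h with h1 | h1
      · exact ht.1.ne' (hi htI (by simp) h1)
      · exact ht.2.ne (hi htI (by simp) h1)
    obtain ⟨U, hUo, hUt, hU⟩ := H.local_homeo _ hne
    have hfU : InjOn H.f U := injOn_iff_injective.2 hU.injective
    have hopen : IsOpen (γ ⁻¹' U ∩ Ioo 0 1) := (hUo.preimage hγ).inter isOpen_Ioo
    obtain ⟨ε, hε, hb⟩ := Metric.isOpen_iff.1 hopen t ⟨hUt, ht⟩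
    have hsub : Icc (t - ε / 2) (t + ε / 2) ⊆ γ ⁻¹' U ∩ Ioo 0 1 := by
      refine subset_trans (fun s hs => ?_) hb
      rw [Metric.mem_ball, Real.dist_eq, abs_lt]
      constructor <;> linarith [hs.1, hs.2]
    refine ⟨ε / 2, by linarith, fun s hs => (hsub hs).2, fun a ha b hb hab => ?_⟩
    have h1 := hfU (hsub ha).1 (hsub hb).1 hab
    exact hi (Ioo_subset_Icc_self (hsub ha).2) (Ioo_subset_Icc_self (hsub hb).2) h1
  have key : ∀ a b : ℝ, 0 ≤ a → a < b → b ≤ 1 → σ a ≠ σ b := by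
    intro a b ha hab hb heq
    -- a point of the loop different from the base
    obtain ⟨t₀, ht₀, hne⟩ : ∃ t ∈ Icc a b, σ t ≠ σ a := by
      by_contra hcon
      push Not at hcon
      obtain ⟨ε, hε, h1, h2⟩ := hloc ((a + b) / 2) ⟨by linarith, by linarith⟩
      have hm : 0 < min ε ((b - a) / 2) := lt_min hε (by linarith)
      have hm1 : min ε ((b - a) / 2) ≤ ε := min_le_left _ _
      have hm2 : min ε ((b - a) / 2) ≤ (b - a) / 2 := min_le_right _ _
      have e1 := hcon ((a + b) / 2) ⟨by linarith, by linarith⟩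
      have e2 := hcon ((a + b) / 2 + min ε ((b - a) / 2)) ⟨by linarith, by linarith⟩
      have := h2 ⟨by linarith, by linarith⟩ ⟨by linarith, by linarith⟩ (e1.trans e2.symm)
      linarith
    obtain ⟨q, ⟨t, ht, rfl⟩, hq1, -, hq3⟩ := exists_far H.arms_finite
      (isCompact_Icc.image hσc) (mem_image_of_mem σ ht₀) hne
    have hta : a < t := lt_of_le_of_ne ht.1 (by rintro rfl; exact hq1 rfl)
    have htb : t < b := lt_of_le_of_ne ht.2 (by rintro rfl; exact hq1 heq.symm)
    obtain ⟨ε, hε, h1, h2⟩ := hloc t ⟨by linarith, by linarith⟩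
    set η := min ε (min (t - a) (b - t)) with hη
    have hm : 0 < η := lt_min hε (lt_min (by linarith) (by linarith))
    have hm1 : η ≤ ε := min_le_left _ _
    have hm2 : η ≤ t - a := (min_le_right _ _).trans (min_le_left _ _)
    have hm3 : η ≤ b - t := (min_le_right _ _).trans (min_le_right _ _)
    have h3 : InjOn σ (Icc (t - η) (t + η)) :=
      h2.mono (Icc_subset_Icc (by linarith) (by linarith))
    have h4 := H.arc_of_injOn (by linarith) hσc.continuousOn h3
    have h5 : σ t ∈ H.arc (σ (t - η)) (σ (t + η)) :=
      h4 ▸ ⟨t, ⟨by linarith, by linarith⟩, rfl⟩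
    have hn1 : σ (t - η) ≠ σ t := fun h => by
      have := h3 ⟨le_rfl, by linarith⟩ ⟨by linarith, by linarith⟩ h
      linarith
    have hn2 : σ (t + η) ≠ σ t := fun h => by
      have := h3 ⟨by linarith, le_rfl⟩ ⟨by linarith, by linarith⟩ h
      linarith
    have h6 := H.arc_sep h5 hn1.symm hn2.symm
    have h7 := hq3 _ ⟨t - η, ⟨by linarith, by linarith⟩, rfl⟩ hn1
    have h8 := hq3 _ ⟨t + η, ⟨by linarith, by linarith⟩, rfl⟩ hn2
    exact h6 ((armTo_eq_of_mem h7).trans (armTo_eq_of_mem h8).symm)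
  have hinj : InjOn σ (Icc 0 1) := by
    intro a ha b hb hab
    rcases lt_trichotomy a b with h | h | h
    · exact absurd hab (key a b ha.1 h hb.2)
    · exact h
    · exact absurd hab.symm (key b a hb.1 h ha.2)
  rw [harc]
  constructor
  · rintro _ ⟨a, ha, rfl⟩ _ ⟨b, hb, rfl⟩ hab
    rw [hinj ha hb hab]
  · rw [← H.arc_of_injOn zero_le_one hσc.continuousOn hinj, image_image]

end HubbardTree

namespace HubbardTree
open Set
variable {X : Type*} [TopologicalSpace X] (H : HubbardTree X)

theorem f_arc {x y : X} (h : H.c0 ∈ H.arc x y → H.c0 = x ∨ H.c0 = y) :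
    InjOn H.f (H.arc x y) ∧ H.f '' H.arc x y = H.arc (H.f x) (H.f y) :=
  H.injOn_arc (by rintro p hp rfl; exact h hp)

theorem f_ne {x y : X} (hxy : x ≠ y) (h : H.c0 ∈ H.arc x y → H.c0 = x ∨ H.c0 = y) :
    H.f x ≠ H.f y := fun e =>
  hxy ((H.f_arc h).1 (H.left_mem_arc _ _) (H.right_mem_arc _ _) e)

theorem armTo_of_mem_arc {x q a : X} (hq : q ∈ H.arc x a) (hqx : q ≠ x) :
    armTo x q = armTo x a := by
  by_contra hne
  have h1 : x ∈ H.arc q a := H.mem_arc_iff.2 (Or.inr (Or.inr hne))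
  rw [H.arc_comm] at h1 hq
  exact hqx (H.arc_antisymm h1 hq).symm

theorem exists_rep {x a : X} (ha : a ≠ x) (hx : x ≠ H.c0) :
    ∃ a', a' ≠ x ∧ armTo x a' = armTo x a ∧ (H.c0 ∈ H.arc x a' → H.c0 = a') := by
  by_cases h : H.c0 ∈ H.arc x a
  · exact ⟨H.c0, hx.symm, H.armTo_of_mem_arc h hx.symm, fun _ => rfl⟩
  · exact ⟨a, ha, rfl, fun h' => absurd h' h⟩

theorem local_inj {x a b : X} (ha : a ≠ x) (hb : b ≠ x)
    (hca : H.c0 ∈ H.arc x a → H.c0 = a) (hcb : H.c0 ∈ H.arc x b → H.c0 = b)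
    (hne : armTo x a ≠ armTo x b) :
    armTo (H.f x) (H.f a) ≠ armTo (H.f x) (H.f b) := by
  have hx : x ∈ H.arc a b := H.mem_arc_iff.2 (Or.inr (Or.inr hne))
  have hc : H.c0 ∈ H.arc a b → H.c0 = a ∨ H.c0 = b := by
    intro h
    rcases H.arc_subset_union a x b h with h1 | h1
    · rw [H.arc_comm] at h1; exact Or.inl (hca h1)
    · exact Or.inr (hcb h1)
  obtain ⟨hi, him⟩ := H.f_arc hc
  refine H.arc_sep (him ▸ mem_image_of_mem _ hx) ?_ ?_
  · exact fun e => ha (hi hx (H.left_mem_arc _ _) e).symm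
  · exact fun e => hb (hi hx (H.right_mem_arc _ _) e).symm

theorem not_isEndpoint_image {x : X} (hx : x ≠ H.c0) (h : ¬ IsEndpoint x) :
    ¬ IsEndpoint (H.f x) := by
  obtain ⟨a, ha⟩ : ∃ a, a ≠ x := ⟨H.c0, hx.symm⟩
  obtain ⟨b, hb, hab⟩ : ∃ b, b ≠ x ∧ b ∉ armTo x a := by
    by_contra hcon
    push Not at hcon
    exact h (isEndpoint_of ha.symm hcon)
  have hab : armTo x a ≠ armTo x b := fun e => hab ((mem_armTo_iff hb).2 e.symm)
  obtain ⟨a', ha', e1, ca⟩ := H.exists_rep ha hx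
  obtain ⟨b', hb', e2, cb⟩ := H.exists_rep hb hx
  have := H.local_inj ha' hb' ca cb (by rwa [e1, e2])
  intro hend
  refine this (armTo_eq_of_isEndpoint hend ?_ ?_)
  · exact (H.f_ne ha'.symm (fun h => Or.inr (ca h))).symm
  · exact (H.f_ne hb'.symm (fun h => Or.inr (cb h))).symm

theorem c1_isEndpoint : IsEndpoint H.c1 := by
  have := H.t2
  have := H.compact
  have := H.conn
  by_contra hc1
  obtain ⟨e, he1, he⟩ := exists_endpoint_arm H.arms_finite (s := H.c0) (u := H.c1) H.crit_not_fixed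
  have hec : e ≠ H.c0 := ne_of_mem_armTo he1
  have hex := H.endpoints_on_orbit e he
  classical
  obtain ⟨k, hk, hmin⟩ : ∃ k, H.f^[k] H.c0 = e ∧ ∀ j < k, H.f^[j] H.c0 ≠ e :=
    ⟨Nat.find hex, Nat.find_spec hex, fun j hj => Nat.find_min hex hj⟩
  have hnz : ∀ i, 1 ≤ i → i < k → H.f^[i] H.c0 ≠ H.c0 := by
    intro i h1 h2 h3
    apply hmin (k - i) (by omega)
    rw [← hk]
    conv_rhs => rw [show k = (k - i) + i by omega, Function.iterate_add_apply, h3]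
  have hall : ∀ i, i + 1 ≤ k → ¬ IsEndpoint (H.f^[i + 1] H.c0) := by
    intro i
    induction i with
    | zero => intro _; exact hc1
    | succ i ih =>
      intro hi
      rw [Function.iterate_succ_apply']
      exact H.not_isEndpoint_image (hnz _ (by omega) (by omega)) (ih (by omega))
  rcases k with _ | k
  · exact hec hk.symm
  · exact hall k le_rfl (hk ▸ he)

theorem two_arms {a b c : X} (ha : a ≠ H.c0) (hb : b ≠ H.c0) (hc : c ≠ H.c0)
    (hab : armTo H.c0 a ≠ armTo H.c0 b) (hac : armTo H.c0 a ≠ armTo H.c0 c)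
    (hbc : armTo H.c0 b ≠ armTo H.c0 c) : False := by
  have him : ∀ a, H.f '' H.arc H.c0 a = H.arc H.c1 (H.f a) := fun a =>
    (H.f_arc (fun _ => Or.inl rfl)).2
  have hne : ∀ a, a ≠ H.c0 → H.f a ≠ H.c1 := fun a ha =>
    (H.f_ne ha.symm (fun _ => Or.inl rfl)).symm
  have hns : ∀ u w, u ≠ H.c1 → w ≠ H.c1 → H.c1 ∉ H.arc u w := by
    intro u w hu hw h
    exact H.arc_sep h hu.symm hw.symm (armTo_eq_of_isEndpoint H.c1_isEndpoint hu hw)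
  obtain ⟨v, hv, hva, hvb⟩ := H.exists_median (hns _ _ (hne a ha) (hne b hb))
  obtain ⟨w, hw, hwv, hwc⟩ := H.exists_median (hns _ _ hv (hne c hc))
  have hwa := H.arc_subset_left hva hwv
  have hwb := H.arc_subset_left hvb hwv
  rw [← him] at hwa hwb hwc
  obtain ⟨a', ha1, ha2⟩ := hwa
  obtain ⟨b', hb1, hb2⟩ := hwb
  obtain ⟨c', hc1, hc2⟩ := hwc
  have hz : ∀ p, H.f p = w → p ≠ H.c0 := by rintro p h rfl; exact hw h.symm
  rw [← H.armTo_of_mem_arc ha1 (hz _ ha2), ← H.armTo_of_mem_arc hb1 (hz _ hb2)] at hab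
  rw [← H.armTo_of_mem_arc ha1 (hz _ ha2), ← H.armTo_of_mem_arc hc1 (hz _ hc2)] at hac
  rw [← H.armTo_of_mem_arc hc1 (hz _ hc2), ← H.armTo_of_mem_arc hb1 (hz _ hb2)] at hbc
  obtain ⟨p, q, hpq⟩ := H.two_preimages w
  have h1 := hpq ha2
  have h2 := hpq hb2
  have h3 := hpq hc2
  simp only [mem_insert_iff, mem_singleton_iff] at h1 h2 h3
  rcases h1 with rfl | rfl <;> rcases h2 with rfl | rfl <;> rcases h3 with rfl | rfl <;>
    simp_all

theorem symOf_eq_iff {y c : X} (hy : y ≠ H.c0) : H.symOf y = H.symOf c ↔ H.c0 ∉ H.arc y c := by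
  constructor
  · intro h hmem
    by_cases hc : c = H.c0
    · subst hc
      simp only [symOf, hy, if_false, if_true] at h
      split_ifs at h
    have hsep := H.arc_sep hmem hy.symm (Ne.symm hc)
    have hc1 : H.c1 ≠ H.c0 := H.crit_not_fixed
    simp only [symOf, hy, hc, if_false] at h
    by_cases h1 : y ∈ H.T1 <;> by_cases h2 : c ∈ H.T1
    · exact hsep ((armTo_eq_of_mem h1).trans (armTo_eq_of_mem h2).symm)
    · simp [h1, h2] at h
    · simp [h1, h2] at h
    · refine H.two_arms hy hc hc1 hsep ?_ ?_
      · exact fun e => h1 ((mem_armTo_iff hy).2 e)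
      · exact fun e => h2 ((mem_armTo_iff hc).2 e)
  · intro h
    have hc : c ≠ H.c0 := by rintro rfl; exact h (H.right_mem_arc _ _)
    have he := H.armTo_eq_of_notMem h
    have : y ∈ H.T1 ↔ c ∈ H.T1 := by
      change y ∈ armTo _ _ ↔ c ∈ armTo _ _
      rw [mem_armTo_iff hy, mem_armTo_iff hc, he]
    by_cases h1 : c ∈ H.T1
    · simp [symOf, hy, hc, this.2 h1, h1]
    · simp [symOf, hy, hc, mt this.1 h1, h1]

theorem mapsLocal {x a : X} (hx : x ≠ H.c0) (ha : a ≠ x) (hc : H.c0 ∈ H.arc x a → H.c0 = a) :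
    MapsLocalArm H.f x (armTo x a) (armTo (H.f x) (H.f a)) := by
  have := H.t2
  refine ⟨armTo_mem_arms ha, armTo_mem_arms (H.f_ne ha.symm fun h => Or.inr (hc h)).symm,
    armTo H.c0 x, (isOpen_armTo (H.arms_finite _) _).mem_nhds (mem_armTo_self hx), ?_⟩
  rintro _ ⟨u, ⟨hu1, hu2⟩, rfl⟩
  have hux : u ≠ x := ne_of_mem_armTo hu1
  have huc : u ≠ H.c0 := ne_of_mem_armTo hu2
  have hnx : ∀ p, p ≠ x → (p = H.c0 ∨ armTo H.c0 p = armTo H.c0 x) → H.f p ≠ H.f x := by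
    intro p hp hpc
    refine H.f_ne hp fun h => ?_
    rcases hpc with rfl | hpc
    · exact Or.inl rfl
    · rcases H.mem_arc_iff.1 h with h1 | h1 | h1
      · exact Or.inl h1
      · exact Or.inr h1
      · exact absurd hpc h1
  have hac : a = H.c0 ∨ armTo H.c0 a = armTo H.c0 x := by
    by_cases h : H.c0 ∈ H.arc x a
    · exact Or.inl (hc h).symm
    · exact Or.inr (H.armTo_eq_of_notMem h).symm
  have hua : H.c0 ∈ H.arc u a → H.c0 = u ∨ H.c0 = a := by
    intro h
    rcases H.mem_arc_iff.1 h with h1 | h1 | h1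
    · exact Or.inl h1
    · exact Or.inr h1
    · rcases hac with h2 | h2
      · exact Or.inr h2.symm
      · rw [armTo_eq_of_mem hu2, h2] at h1; exact absurd rfl h1
  rw [mem_armTo_iff (hnx u hux (Or.inr (armTo_eq_of_mem hu2)))]
  apply H.armTo_eq_of_notMem
  rw [← (H.f_arc hua).2]
  rintro ⟨p, hp, hpx⟩
  have hpx' : p ≠ x := by
    rintro rfl
    exact H.arc_sep hp hux.symm ha.symm (armTo_eq_of_mem hu1)
  refine hnx p hpx' ?_ hpx
  by_cases hpc : p = H.c0
  · exact Or.inl hpc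
  right
  rw [← armTo_eq_of_mem hu2]
  by_contra hne
  have h3 : H.c0 ∈ H.arc p u := H.mem_arc_iff.2 (Or.inr (Or.inr hne))
  rw [H.arc_comm] at h3
  have h4 := H.arc_subset_left hp h3
  rcases hua h4 with h5 | h5
  · exact huc h5.symm
  · subst h5
    exact hpc (H.arc_antisymm hp h3)

theorem ML_comp {g h : X → X} {x : X} {C C' C'' : Set X} (hg : Continuous g)
    (h1 : MapsLocalArm g x C C') (h2 : MapsLocalArm h (g x) C' C'') :
    MapsLocalArm (h ∘ g) x C C'' := by
  obtain ⟨hC, hC', U, hU, hU2⟩ := h1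
  obtain ⟨-, hC'', V, hV, hV2⟩ := h2
  refine ⟨hC, hC'', U ∩ g ⁻¹' V, Filter.inter_mem hU (hg.continuousAt hV), ?_⟩
  rintro _ ⟨u, ⟨hu1, hu2, hu3⟩, rfl⟩
  exact hV2 ⟨g u, ⟨hU2 ⟨u, ⟨hu1, hu2⟩, rfl⟩, hu3⟩, rfl⟩

theorem ML_add {a b n : ℕ} (hn : n = a + b) {x : X} {C C' C'' : Set X}
    (h1 : MapsLocalArm H.f^[a] x C C') (h2 : MapsLocalArm H.f^[b] (H.f^[a] x) C' C'') :
    MapsLocalArm H.f^[n] x C C'' := by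
  rw [hn, Nat.add_comm, Function.iterate_add]
  exact ML_comp (H.cont.iterate a) h1 h2

theorem ML_unique {g : X → X} {x : X} {C D D' : Set X}
    (h1 : MapsLocalArm g x C D) (h2 : MapsLocalArm g x C D') (H : HubbardTree X) : D = D' := by
  have := H.t2
  have := H.conn
  obtain ⟨⟨y, hy, hCy⟩, hD, U, hU, hU2⟩ := h1
  obtain ⟨-, hD', V, hV, hV2⟩ := h2
  obtain ⟨w, hw1, hw2⟩ := mem_closure_iff_nhds.1 (base_mem_closure (H.arms_finite x) hy)
    (U ∩ V) (Filter.inter_mem hU hV)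
  change w ∈ connectedComponentIn {x}ᶜ y at hw2
  rw [← hCy] at hw2
  have e1 := arm_eq_armTo hD (hU2 ⟨w, ⟨hw2, hw1.1⟩, rfl⟩)
  have e2 := arm_eq_armTo hD' (hV2 ⟨w, ⟨hw2, hw1.2⟩, rfl⟩)
  rw [e1, e2]

theorem ML_zero {x : X} {C : Set X} (hC : C ∈ arms x) : MapsLocalArm H.f^[0] x C C :=
  ⟨hC, hC, univ, Filter.univ_mem, by rintro _ ⟨u, hu, rfl⟩; exact hu.1⟩

theorem ML_one {x : X} {C D : Set X} (h : MapsLocalArm H.f x C D) : MapsLocalArm H.f^[1] x C D := h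

theorem ML_exists (n : ℕ) {x : X} (hx : ∀ i, H.f^[i] x ≠ H.c0) {C : Set X} (hC : C ∈ arms x) :
    ∃ D, MapsLocalArm H.f^[n] x C D := by
  induction n with
  | zero => exact ⟨C, H.ML_zero hC⟩
  | succ n ih =>
    obtain ⟨D, hD⟩ := ih
    obtain ⟨a, ha, rfl⟩ := hD.2.1
    obtain ⟨a', ha', e1, ca⟩ := H.exists_rep ha (hx n)
    have := H.mapsLocal (hx n) ha' ca
    rw [e1] at this
    exact ⟨_, H.ML_add rfl hD (H.ML_one this)⟩

theorem ML_inj (n : ℕ) {x : X} (hx : ∀ i, H.f^[i] x ≠ H.c0) {C C' D : Set X}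
    (h1 : MapsLocalArm H.f^[n] x C D) (h2 : MapsLocalArm H.f^[n] x C' D) : C = C' := by
  induction n generalizing D with
  | zero =>
    rw [ML_unique (H.ML_zero h1.1) h1 H, ML_unique (H.ML_zero h2.1) h2 H]
  | succ n ih =>
    obtain ⟨E, hE⟩ := H.ML_exists n hx h1.1
    obtain ⟨E', hE'⟩ := H.ML_exists n hx h2.1
    obtain ⟨a, ha, rfl⟩ := hE.2.1
    obtain ⟨b, hb, rfl⟩ := hE'.2.1
    obtain ⟨a', ha', e1, ca⟩ := H.exists_rep ha (hx n)
    obtain ⟨b', hb', e2, cb⟩ := H.exists_rep hb (hx n)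
    have m1 := H.mapsLocal (hx n) ha' ca
    have m2 := H.mapsLocal (hx n) hb' cb
    change MapsLocalArm H.f^[n] x C (armTo _ _) at hE
    change MapsLocalArm H.f^[n] x C' (armTo _ _) at hE'
    rw [← e1] at hE
    rw [← e2] at hE'
    have u1 := ML_unique (H.ML_add rfl hE (H.ML_one m1)) h1 H
    have u2 := ML_unique (H.ML_add rfl hE' (H.ML_one m2)) h2 H
    by_cases heq : armTo (H.f^[n] x) a' = armTo (H.f^[n] x) b'
    · rw [heq] at hE
      exact ih hE hE'
    · exact absurd (u1.trans u2.symm) (H.local_inj ha' hb' ca cb heq)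

theorem follow {x a : X} (n : ℕ) (h : ∀ i < n, H.c0 ∉ H.arc (H.f^[i] x) (H.f^[i] a)) :
    InjOn H.f^[n] (H.arc x a) ∧ H.f^[n] '' H.arc x a = H.arc (H.f^[n] x) (H.f^[n] a) := by
  induction n with
  | zero => simp [InjOn]
  | succ n ih =>
    obtain ⟨h1, h2⟩ := ih fun i hi => h i (by omega)
    obtain ⟨h3, h4⟩ := H.f_arc (fun h' => absurd h' (h n (by omega)))
    rw [Function.iterate_succ']
    refine ⟨?_, ?_⟩
    · exact h3.comp h1 (fun p hp => h2 ▸ mem_image_of_mem _ hp)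
    · rw [image_comp, h2, h4]; rfl

theorem follow_ML {x a : X} (n : ℕ) (hx : ∀ i, H.f^[i] x ≠ H.c0) (ha : a ≠ x)
    (h : ∀ i < n, H.c0 ∉ H.arc (H.f^[i] x) (H.f^[i] a)) :
    MapsLocalArm H.f^[n] x (armTo x a) (armTo (H.f^[n] x) (H.f^[n] a)) := by
  induction n with
  | zero => exact H.ML_zero (armTo_mem_arms ha)
  | succ n ih =>
    have h1 := ih fun i hi => h i (by omega)
    have h2 := (H.follow n fun i hi => h i (by omega)).1
    have hne : H.f^[n] a ≠ H.f^[n] x := fun e =>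
      ha (h2 (H.right_mem_arc _ _) (H.left_mem_arc _ _) e)
    have h3 := H.mapsLocal (hx n) hne (fun h' => absurd h' (h n (by omega)))
    rw [Function.iterate_succ_apply', Function.iterate_succ_apply']
    exact H.ML_add rfl h1 (H.ML_one h3)

/-- if the arc hits the critical point for the first time at time `n`, then the arm is mapped to
the arm pointing to the critical value -/
theorem hit_ML {x a : X} (n : ℕ) (hx : ∀ i, H.f^[i] x ≠ H.c0) (ha : a ≠ x)
    (h : ∀ i < n, H.c0 ∉ H.arc (H.f^[i] x) (H.f^[i] a))
    (hn : H.c0 ∈ H.arc (H.f^[n] x) (H.f^[n] a)) :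
    MapsLocalArm H.f^[n + 1] x (armTo x a) (armTo (H.f^[n + 1] x) H.c1) := by
  have h1 := H.follow_ML n hx ha h
  rw [← H.armTo_of_mem_arc hn (hx n).symm] at h1
  have h3 := H.mapsLocal (hx n) (hx n).symm (fun _ => rfl)
  rw [Function.iterate_succ_apply']
  exact H.ML_add rfl h1 (H.ML_one h3)

theorem exp {x y : X} (hxy : x ≠ y) (hx : H.MarkedPt x) (hy : H.MarkedPt y) :
    ∃ n, H.c0 ∈ H.arc (H.f^[n] x) (H.f^[n] y) ∧
      ∀ i < n, H.c0 ∉ H.arc (H.f^[i] x) (H.f^[i] y) := by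
  classical
  have hex : ∃ n, H.c0 ∈ H.arc (H.f^[n] x) (H.f^[n] y) := by
    by_contra hcon
    push Not at hcon
    obtain ⟨n, hn⟩ := H.expansive x y hxy hx hy
    rw [(H.follow n fun i _ => hcon i).2] at hn
    exact hcon n hn
  exact ⟨Nat.find hex, Nat.find_spec hex, fun i hi => Nat.find_min hex hi⟩

end HubbardTree

theorem rho_eq {ν : ℕ → Sym} {n j : ℕ} (h1 : n < j) (h2 : ν j ≠ ν (j - n))
    (h3 : ∀ i, n < i → i < j → ν i = ν (i - n)) : rho ν n = (j : ℕ∞) := by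
  apply le_antisymm
  · exact sInf_le ⟨j, rfl, h1, h2⟩
  · refine le_sInf ?_
    rintro e ⟨i, rfl, hi1, hi2⟩
    by_contra hlt
    rw [not_le, Nat.cast_lt] at hlt
    exact hi2 (h3 i hi1 hlt)

theorem rho_spec {ν : ℕ → Sym} {n j : ℕ} (h : rho ν n = (j : ℕ∞)) :
    n < j ∧ ν j ≠ ν (j - n) := by
  have hne : {e : ℕ∞ | ∃ j : ℕ, e = (j : ℕ∞) ∧ n < j ∧ ν j ≠ ν (j - n)}.Nonempty := by
    by_contra hcon
    rw [Set.not_nonempty_iff_eq_empty] at hcon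
    rw [rho, hcon, sInf_empty] at h
    exact ENat.coe_ne_top j h.symm
  obtain ⟨i, hi, h1, h2⟩ := csInf_mem hne
  change rho ν n = _ at hi
  rw [h, Nat.cast_inj] at hi
  subst hi
  exact ⟨h1, h2⟩

theorem RhoOrbit.le {ν : ℕ → Sym} {k m : ℕ} (h : RhoOrbit ν k m) : k ≤ m := by
  induction h with
  | refl => exact le_rfl
  | step _ hr ih => exact ih.trans (rho_spec hr).1.le

theorem RhoOrbit.head {ν : ℕ → Sym} {k m : ℕ} (h : RhoOrbit ν k m) :
    k = m ∨ ∃ j : ℕ, rho ν k = (j : ℕ∞) ∧ RhoOrbit ν j m := by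
  induction h with
  | refl => exact Or.inl rfl
  | step _ hr ih =>
    rcases ih with rfl | ⟨j, hj, hj2⟩
    · exact Or.inr ⟨_, hr, RhoOrbit.refl _⟩
    · exact Or.inr ⟨j, hj, hj2.step hr⟩

theorem RhoOrbit.cons {ν : ℕ → Sym} {k j m : ℕ} (hr : rho ν k = (j : ℕ∞)) (h : RhoOrbit ν j m) :
    RhoOrbit ν k m := by
  induction h with
  | refl => exact (RhoOrbit.refl k).step hr
  | step _ hr2 ih => exact ih.step hr2

namespace HubbardTree
open Set
variable {X : Type*} [TopologicalSpace X] (H : HubbardTree X)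

/-- The part of the hypotheses about the characteristic point used below. -/
structure Setup (z : X) (m : ℕ) : Prop where
  pos : 1 ≤ m
  per : H.f^[m] z = z
  exact : ∀ k, 1 ≤ k → k < m → H.f^[k] z ≠ z
  nc0 : ∀ i, H.f^[i] z ≠ H.c0
  nc1 : ∀ i, H.f^[i] z ≠ H.c1
  ne : armTo z H.c0 ≠ armTo z H.c1
  orb : ∀ k, H.f^[k] z ≠ z → armTo z (H.f^[k] z) = armTo z H.c0

theorem setup_of_evil {z : X} {m : ℕ} (h : H.IsEvilOrbit z m) : H.Setup z m := by
  obtain ⟨⟨h1, h2, h3⟩, -, ⟨Cv, Cz, hv, hz, hne, hc1, hc0, horb⟩, -⟩ := h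
  have ev := arm_eq_armTo hv hc1
  have ez := arm_eq_armTo hz hc0
  have nc1 : ∀ i, H.f^[i] z ≠ H.c1 := by
    intro i hi
    by_cases h : H.f^[i] z = z
    · rw [← hi, h] at hc1
      rw [ev] at hc1
      exact notMem_armTo _ _ hc1
    · have := horb i h
      rw [hi] at this
      exact hne (ev.trans (arm_eq_armTo hz this).symm)
  refine ⟨h1, h2, h3, ?_, nc1, ?_, ?_⟩
  · intro i hi
    apply nc1 (i + 1)
    rw [Function.iterate_succ_apply', hi]; rfl
  · rw [← ev, ← ez]; exact hne.symm
  · intro k hk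
    rw [← ez]
    exact (arm_eq_armTo hz (horb k hk)).symm

variable {H} {z : X} {m : ℕ}

theorem Setup.nc0' (S : H.Setup z m) (r i : ℕ) : H.f^[i] (H.f^[r] z) ≠ H.c0 := by
  rw [← Function.iterate_add_apply]; exact S.nc0 _

theorem Setup.mod (S : H.Setup z m) (i : ℕ) : H.f^[i % m] z = H.f^[i] z :=
  Function.IsPeriodicPt.iterate_mod_apply (S.per : Function.IsPeriodicPt H.f m z) i

theorem Setup.mul (S : H.Setup z m) (i : ℕ) : H.f^[m * i] z = z := by
  rw [← S.mod, Nat.mul_mod_right]; rfl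

theorem Setup.sym (S : H.Setup z m) (r i : ℕ) :
    H.c0 ∉ H.arc (H.f^[i] (H.f^[r] z)) (H.f^[i] H.c1) ↔
      H.symOf (H.f^[r + i] z) = H.kneading (i + 1) := by
  rw [Nat.add_comm r i, Function.iterate_add_apply]
  exact (H.symOf_eq_iff (S.nc0' r i)).symm

theorem Setup.step (S : H.Setup z m) {r : ℕ} (h1 : 1 ≤ r) (hr : r < m) :
    (∃ n, r + n + 1 ≤ m ∧ H.symOf (H.f^[r + n] z) ≠ H.kneading (n + 1) ∧
      (∀ i < n, H.symOf (H.f^[r + i] z) = H.kneading (i + 1)) ∧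
      MapsLocalArm H.f^[n + 1] (H.f^[r] z) (armTo (H.f^[r] z) H.c1)
        (armTo (H.f^[r + n + 1] z) H.c1)) ∨
    ((∀ i, r + i < m → H.symOf (H.f^[r + i] z) = H.kneading (i + 1)) ∧
      MapsLocalArm H.f^[m - r] (H.f^[r] z) (armTo (H.f^[r] z) H.c1) (armTo z H.c0)) := by
  classical
  by_cases hex : ∃ n, r + n < m ∧ H.symOf (H.f^[r + n] z) ≠ H.kneading (n + 1)
  · left
    obtain ⟨hn1, hn2⟩ := Nat.find_spec hex
    have hmin : ∀ i < Nat.find hex, H.symOf (H.f^[r + i] z) = H.kneading (i + 1) := by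
      intro i hi
      by_contra hcon
      exact Nat.find_min hex hi ⟨by omega, hcon⟩
    set n := Nat.find hex with hn
    refine ⟨n, by omega, hn2, hmin, ?_⟩
    have := H.hit_ML n (S.nc0' r) (S.nc1 r).symm (fun i hi => (S.sym r i).2 (hmin i hi))
      (by by_contra hcon; exact hn2 ((S.sym r n).1 hcon))
    rw [← Function.iterate_add_apply, show n + 1 + r = r + n + 1 by ring] at this
    exact this
  · right
    push Not at hex
    refine ⟨hex, ?_⟩
    have hh : ∀ i < m - r, H.c0 ∉ H.arc (H.f^[i] (H.f^[r] z)) (H.f^[i] H.c1) := fun i hi =>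
      (S.sym r i).2 (hex i (by omega))
    have hf := H.follow (m - r) hh
    have hm := H.follow_ML (m - r) (S.nc0' r) (S.nc1 r).symm hh
    have hzz : H.f^[m - r] (H.f^[r] z) = z := by
      rw [← Function.iterate_add_apply, Nat.sub_add_cancel hr.le, S.per]
    have hzarc : z ∈ H.arc (H.f^[r] z) H.c1 := by
      refine H.mem_arc_iff.2 (Or.inr (Or.inr ?_))
      rw [S.orb r (S.exact r h1 hr)]
      exact S.ne
    have hz2 : H.f^[m - r] z ∈ H.arc z (H.f^[m - r] H.c1) := by
      have := mem_image_of_mem H.f^[m - r] hzarc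
      rwa [hf.2, hzz] at this
    have hne := S.exact (m - r) (by omega) (by omega)
    rw [hzz, ← H.armTo_of_mem_arc hz2 hne, S.orb _ hne] at hm
    exact hm

theorem Setup.arrive0 (S : H.Setup z m) :
    MapsLocalArm H.f^[m - m] (H.f^[m] z) (armTo (H.f^[m] z) H.c1) (armTo z H.c1) := by
  rw [Nat.sub_self, S.per]
  exact H.ML_zero (armTo_mem_arms (S.nc1 0).symm)

theorem Setup.weak (S : H.Setup z m) (d : ℕ) : ∀ r, 1 ≤ r → r ≤ m → m - r = d →
    MapsLocalArm H.f^[m - r] (H.f^[r] z) (armTo (H.f^[r] z) H.c1) (armTo z H.c0) ∨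
    MapsLocalArm H.f^[m - r] (H.f^[r] z) (armTo (H.f^[r] z) H.c1) (armTo z H.c1) := by
  induction d using Nat.strong_induction_on with
  | _ d ih =>
    intro r h1 h2 hd
    rcases h2.eq_or_lt with rfl | hlt
    · exact Or.inr S.arrive0
    rcases S.step h1 hlt with ⟨n, hn, -, -, hM⟩ | ⟨-, hM⟩
    · have key : ∀ D, MapsLocalArm H.f^[m - (r + n + 1)] (H.f^[r + n + 1] z)
          (armTo (H.f^[r + n + 1] z) H.c1) D →
          MapsLocalArm H.f^[m - r] (H.f^[r] z) (armTo (H.f^[r] z) H.c1) D := by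
        intro D hD
        refine H.ML_add (a := n + 1) (b := m - (r + n + 1)) (by omega) hM ?_
        rwa [← Function.iterate_add_apply, show n + 1 + r = r + n + 1 by ring]
      exact (ih (m - (r + n + 1)) (by omega) (r + n + 1) (by omega) hn rfl).imp (key _) (key _)
    · exact Or.inl hM

theorem Setup.strong (S : H.Setup z m)
    (hν : ∀ i < m, H.symOf (H.f^[i] z) = H.kneading (i + 1)) (d : ℕ) :
    ∀ r, 1 ≤ r → r ≤ m → m - r = d →
    (¬ RhoOrbit H.kneading r m →
      MapsLocalArm H.f^[m - r] (H.f^[r] z) (armTo (H.f^[r] z) H.c1) (armTo z H.c0)) ∧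
    (RhoOrbit H.kneading r m →
      MapsLocalArm H.f^[m - r] (H.f^[r] z) (armTo (H.f^[r] z) H.c1) (armTo z H.c1)) := by
  induction d using Nat.strong_induction_on with
  | _ d ih =>
    intro r h1 h2 hd
    rcases h2.eq_or_lt with rfl | hlt
    · exact ⟨fun h => absurd (RhoOrbit.refl _) h, fun _ => S.arrive0⟩
    rcases S.step h1 hlt with ⟨n, hn, hne, hmin, hM⟩ | ⟨hall, hM⟩
    · have key : ∀ D, MapsLocalArm H.f^[m - (r + n + 1)] (H.f^[r + n + 1] z)
          (armTo (H.f^[r + n + 1] z) H.c1) D →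
          MapsLocalArm H.f^[m - r] (H.f^[r] z) (armTo (H.f^[r] z) H.c1) D := by
        intro D hD
        refine H.ML_add (a := n + 1) (b := m - (r + n + 1)) (by omega) hM ?_
        rwa [← Function.iterate_add_apply, show n + 1 + r = r + n + 1 by ring]
      have hrho : rho H.kneading r = ((r + n + 1 : ℕ) : ℕ∞) := by
        apply rho_eq (by omega)
        · rw [show r + n + 1 - r = n + 1 by omega, ← hν (r + n) (by omega)]
          exact hne
        · intro i hi1 hi2
          obtain ⟨t, rfl⟩ : ∃ t, i = r + t + 1 := ⟨i - r - 1, by omega⟩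
          rw [show r + t + 1 - r = t + 1 by omega, ← hν (r + t) (by omega)]
          exact hmin t (by omega)
      obtain ⟨k1, k2⟩ := ih (m - (r + n + 1)) (by omega) (r + n + 1) (by omega) hn rfl
      constructor
      · intro hno
        exact key _ (k1 fun h => hno (h.cons hrho))
      · intro hyes
        rcases hyes.head with h | ⟨j, hj, hj2⟩
        · omega
        · rw [hrho, Nat.cast_inj] at hj
          subst hj
          exact key _ (k2 hj2)
    · refine ⟨fun _ => hM, fun hyes => ?_⟩
      exfalso
      rcases hyes.head with h | ⟨j, hj, hj2⟩
      · omega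
      · obtain ⟨j1, j2⟩ := rho_spec hj
        have j3 := hj2.le
        obtain ⟨t, rfl⟩ : ∃ t, j = r + t + 1 := ⟨j - r - 1, by omega⟩
        rw [show r + t + 1 - r = t + 1 by omega, ← hν (r + t) (by omega)] at j2
        exact j2 (hall t (by omega))

theorem Setup.arrive (S : H.Setup z m) {n : ℕ} {C D : Set X}
    (h1 : MapsLocalArm H.f^[n + 1] z C (armTo (H.f^[n + 1] z) H.c1))
    (h2 : MapsLocalArm H.f^[m - (n % m + 1)] (H.f^[n % m + 1] z)
      (armTo (H.f^[n % m + 1] z) H.c1) D) :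
    MapsLocalArm H.f^[m * (n / m + 1)] z C D := by
  have e : H.f^[n % m + 1] z = H.f^[n + 1] z := by
    rw [Function.iterate_succ_apply' H.f (n % m), S.mod, Function.iterate_succ_apply' H.f n]
  rw [e] at h2
  refine H.ML_add ?_ h1 h2
  have h3 := Nat.mod_lt n S.pos
  have h4 := Nat.div_add_mod n m
  rw [Nat.mul_add]
  omega

theorem Setup.reach (S : H.Setup z m) (hb : IsBranchPt z) {C : Set X} (hC : C ∈ arms z) :
    ∃ j, MapsLocalArm H.f^[m * j] z C (armTo z H.c0) ∨
      MapsLocalArm H.f^[m * j] z C (armTo z H.c1) := by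
  have := H.t2
  have := H.compact
  have := H.conn
  obtain ⟨a, ha, rfl⟩ := hC
  obtain ⟨e, he1, he2⟩ := exists_endpoint_arm H.arms_finite ha
  have hez : e ≠ z := ne_of_mem_armTo he1
  obtain ⟨n, hn1, hn2⟩ := H.exp hez.symm (Or.inl hb) (Or.inr (H.endpoints_on_orbit e he2))
  have h1 := H.hit_ML n S.nc0 hez hn2 hn1
  rw [armTo_eq_of_mem he1] at h1
  exact ⟨n / m + 1, (S.weak _ (n % m + 1) (by omega) (Nat.mod_lt n S.pos) rfl).imp
    (S.arrive h1) (S.arrive h1)⟩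

theorem Setup.exists_return (S : H.Setup z m) : ∃ G : arms z → arms z, Function.Injective G ∧
    ∀ (j : ℕ) (C : arms z), MapsLocalArm H.f^[m * j] z (C : Set X) ((G^[j] C : arms z) : Set X) := by
  have hex : ∀ C : arms z, ∃ D : arms z, MapsLocalArm H.f^[m] z (C : Set X) D := by
    intro C
    obtain ⟨D, hD⟩ := H.ML_exists m S.nc0 C.2
    have := hD.2.1
    rw [S.per] at this
    exact ⟨⟨D, this⟩, hD⟩
  choose G hG using hex
  refine ⟨G, ?_, ?_⟩
  · intro C C' h
    have h1 := hG C
    rw [h] at h1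
    exact Subtype.ext (H.ML_inj m S.nc0 h1 (hG C'))
  · intro j
    induction j with
    | zero => intro C; exact H.ML_zero C.2
    | succ j ih =>
      intro C
      rw [Function.iterate_succ_apply']
      refine H.ML_add (a := m * j) (b := m) (by ring) (ih C) ?_
      rw [S.mul]
      exact hG _

theorem main_aux (H : HubbardTree X) (hevil : H.IsEvilOrbit z m) :
    FailsAdmissibility H.kneading m := by
  have S := H.setup_of_evil hevil
  obtain ⟨-, hbr, -, hnt⟩ := hevil
  have hb : IsBranchPt z := hbr 0
  obtain ⟨G, hGi, hG⟩ := S.exists_return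
  have : Finite (arms z) := (H.arms_finite z).to_subtype
  set L0 : arms z := ⟨armTo z H.c0, armTo_mem_arms (S.nc0 0).symm⟩ with hL0
  set L1 : arms z := ⟨armTo z H.c1, armTo_mem_arms (S.nc1 0).symm⟩ with hL1
  have hne : L0 ≠ L1 := fun h => S.ne (congrArg Subtype.val h)
  have hML : ∀ (j : ℕ) (C D : arms z), MapsLocalArm H.f^[m * j] z (C : Set X) D → G^[j] C = D :=
    fun j C D h => Subtype.ext (ML_unique (hG j C) h H)
  have hreach : ∀ C : arms z, ∃ j, G^[j] C = L0 ∨ G^[j] C = L1 := by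
    intro C
    obtain ⟨j, hj⟩ := S.reach hb C.2
    exact ⟨j, hj.imp (hML j C L0) (hML j C L1)⟩
  -- first step for `L0`
  have hL0step : MapsLocalArm H.f^[0 + 1] z (L0 : Set X) (armTo (H.f^[0 + 1] z) H.c1) :=
    H.hit_ML 0 S.nc0 (S.nc0 0).symm (by simp) (H.right_mem_arc _ _)
  have h0m : 0 % m + 1 = 1 := by simp
  have h0d : 0 / m + 1 = 1 := by simp
  have hGL0' : G L0 = L0 ∨ G L0 = L1 := by
    have := (S.weak _ (0 % m + 1) (by omega) (Nat.mod_lt 0 S.pos) rfl).imp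
      (S.arrive hL0step) (S.arrive hL0step)
    rw [h0d] at this
    exact this.imp (hML 1 L0 L0) (hML 1 L0 L1)
  have hGL0 : G L0 = L0 := by
    rcases hGL0' with h | h
    · exact h
    exfalso
    apply hnt
    have hr1 : ∀ C : arms z, ∃ j, G^[j] C = L1 := by
      intro C
      obtain ⟨j, hj | hj⟩ := hreach C
      · exact ⟨j + 1, by rw [Function.iterate_succ_apply', hj, h]⟩
      · exact ⟨j, hj⟩
    intro C hC C' hC'
    obtain ⟨a, ha⟩ := hr1 ⟨C, hC⟩
    obtain ⟨b, hb'⟩ := hr1 ⟨C', hC'⟩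
    obtain ⟨n, hn, hper⟩ := hGi.mem_periodicPts ⟨C', hC'⟩
    have hnb : G^[n * b] ⟨C', hC'⟩ = ⟨C', hC'⟩ := hper.mul_const b
    have hle : b ≤ n * b := Nat.le_mul_of_pos_left b hn
    refine ⟨(n * b - b) + a, ?_⟩
    have h5 := hG ((n * b - b) + a) ⟨C, hC⟩
    rw [Function.iterate_add_apply, ha, ← hb', ← Function.iterate_add_apply,
      Nat.sub_add_cancel hle, hnb] at h5
    exact h5
  have hGjL0 : ∀ j, G^[j] L0 = L0 := fun j => Function.iterate_fixed hGL0 j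
  have hGjL1 : ∀ j, G^[j] L1 ≠ L0 := fun j h =>
    hne ((hGi.iterate j) ((hGjL0 j).trans h.symm))
  have hGL1 : G L1 ≠ L1 := by
    intro h
    have hall : ∀ C : arms z, C = L0 ∨ C = L1 := by
      intro C
      obtain ⟨j, hj | hj⟩ := hreach C
      · exact Or.inl ((hGi.iterate j) (hj.trans (hGjL0 j).symm))
      · exact Or.inr ((hGi.iterate j) (hj.trans (Function.iterate_fixed h j).symm))
    have hsub : arms z ⊆ {(L0 : Set X), (L1 : Set X)} := by
      intro C hC
      rcases hall ⟨C, hC⟩ with h | h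
      · exact Or.inl (congrArg Subtype.val h)
      · exact Or.inr (congrArg Subtype.val h)
    have h1 := Set.ncard_le_ncard hsub (by simp)
    have h2 := Set.ncard_pair (a := (L0 : Set X)) (b := (L1 : Set X)) (fun h => hne (Subtype.ext h))
    have h3 : 3 ≤ (arms z).ncard := hb
    omega
  -- the first time the arc `[z, c₁]` hits the critical point
  obtain ⟨n, hn1, hn2⟩ := H.exp (S.nc1 0) (Or.inl hb) (Or.inr ⟨1, rfl⟩)
  change H.c0 ∈ H.arc (H.f^[n] z) (H.f^[n] H.c1) at hn1
  have hn2' : ∀ i < n, H.symOf (H.f^[i] z) = H.kneading (i + 1) := by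
    intro i hi
    exact (H.symOf_eq_iff (S.nc0 i)).2 (hn2 i hi)
  have hn1' : H.symOf (H.f^[n] z) ≠ H.kneading (n + 1) := by
    intro h
    exact (H.symOf_eq_iff (S.nc0 n)).1 h hn1
  have hstep : MapsLocalArm H.f^[n + 1] z (L1 : Set X) (armTo (H.f^[n + 1] z) H.c1) :=
    H.hit_ML n S.nc0 (S.nc1 0).symm hn2 hn1
  have hnm : m ≤ n := by
    by_contra hlt
    push Not at hlt
    have := (S.weak _ (n % m + 1) (by omega) (Nat.mod_lt n S.pos) rfl).imp
      (S.arrive hstep) (S.arrive hstep)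
    rw [Nat.div_eq_of_lt hlt, Nat.zero_add] at this
    rcases this with h | h
    · exact hGjL1 1 (hML 1 L1 L0 h)
    · exact hGL1 (hML 1 L1 L1 h)
  have hν : ∀ i < m, H.symOf (H.f^[i] z) = H.kneading (i + 1) := fun i hi =>
    hn2' i (by omega)
  have hperS : ∀ i, H.symOf (H.f^[i % m] z) = H.symOf (H.f^[i] z) := fun i => by rw [S.mod]
  refine ⟨S.pos, ?_, ?_, n + 1, n % m + 1, ?_, by omega, Nat.mod_lt n S.pos, ?_, ?_⟩
  · intro hIA
    have h1 := (S.strong hν _ (0 % m + 1) (by omega) (Nat.mod_lt 0 S.pos) rfl).2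
      (by rw [h0m]; exact hIA)
    have h2 := S.arrive hL0step h1
    rw [h0d] at h2
    have h3 : G L0 = L1 := hML 1 L0 L1 h2
    exact hne (hGL0.symm.trans h3)
  · intro k hkm hk1 hklt
    by_contra hcon
    rw [not_le] at hcon
    have hk : ∀ j, k < j → j ≤ m → H.kneading j = H.kneading (j - k) := by
      intro j hj1 hj2
      by_contra hne'
      have : rho H.kneading k ≤ (j : ℕ∞) := sInf_le ⟨j, rfl, hj1, hne'⟩
      have h2 : (j : ℕ∞) ≤ m := by exact_mod_cast hj2
      exact absurd (this.trans h2) (not_le.2 hcon)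
    have hEk : ∀ i < m, H.symOf (H.f^[i] z) = H.symOf (H.f^[i % k] z) := by
      intro i
      induction i using Nat.strong_induction_on with
      | _ i ih =>
        intro hi
        by_cases hik : i < k
        · rw [Nat.mod_eq_of_lt hik]
        · push Not at hik
          rw [Nat.mod_eq_sub_mod hik, ← ih (i - k) (by omega) (by omega), hν i hi,
            hν (i - k) (by omega), hk (i + 1) (by omega) (by omega)]
          congr 1
          omega
    have hE : ∀ i, H.symOf (H.f^[i] z) = H.symOf (H.f^[i % k] z) := by
      intro i
      rw [← hperS i, hEk _ (Nat.mod_lt i S.pos), Nat.mod_mod_of_dvd i hkm]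
    obtain ⟨l, hl1, -⟩ := H.exp (S.exact k hk1 hklt) (Or.inl (hbr k)) (Or.inl hb)
    rw [← Function.iterate_add_apply] at hl1
    refine (H.symOf_eq_iff (S.nc0 _)).1 ?_ hl1
    rw [hE (l + k), hE l, Nat.add_mod_right]
  · apply rho_eq (by omega)
    · rw [show n + 1 - m = (n - m) + 1 by omega, ← hn2' (n - m) (by have := S.pos; omega)]
      intro h
      apply hn1'
      rw [h, ← hperS n, ← hperS (n - m), Nat.mod_eq_sub_mod hnm]
    · intro i hi1 hi2
      obtain ⟨t, rfl⟩ : ∃ t, i = t + 1 := ⟨i - 1, by omega⟩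
      rw [show t + 1 - m = (t - m) + 1 by omega, ← hn2' t (by omega), ← hn2' (t - m) (by omega),
        ← hperS t, ← hperS (t - m), Nat.mod_eq_sub_mod (by omega : m ≤ t)]
  · exact (Nat.mod_modEq n m).add_right 1
  · by_contra hno
    have h1 := (S.strong hν _ (n % m + 1) (by omega) (Nat.mod_lt n S.pos) rfl).1 hno
    exact hGjL1 _ (hML _ L1 L0 (S.arrive hstep h1))

end HubbardTree

/-- Proposition 5.16, "Evil Orbit Fails Admissibility Condition".
If a Hubbard tree has an evil orbit of branch points of exact period `m` and its
kneading sequence is not `*`-periodic of period less than `m`, then the kneading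
sequence fails the admissibility condition for period `m`. -/
theorem evil_orbit_fails_admissibility
    {X : Type*} [TopologicalSpace X] (H : HubbardTree X) (z : X) (m : ℕ)
    (hevil : H.IsEvilOrbit z m)
    (hnotstar : ¬ ∃ p : ℕ, p < m ∧ StarPeriodic H.kneading p) :
    FailsAdmissibility H.kneading m := by
  exact HubbardTree.main_aux H hevil

end HubbardTrees
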